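/- For every M ∈ E⁴ one has 𝒩(𝒯(M)) ≤ p·𝒩(M)² + q, where p = cS(8 + 4/c + (8+8c)(τ'−τ)) and q is the maximum of the ‖·‖₁ norms of the transported data functions; consequently 𝒯(𝓜_R) ⊆ 𝓜_{pR²+q} for every R > 0, and 𝒯 is a compact operator on 𝓜_R. -/

import Mathlib

open Set MeasureTheory

noncomputable section

/-- The Broadwell collision term `Q(N) = 2cS (N₂N₃ - N₁N₄)` (indexing `N₁ = M 0`, …). -/
def QQ (c S : ℝ) (M : Fin 4 → ℝ → ℝ → ℝ → ℝ) (t x y : ℝ) : ℝ :=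
  2 * c * S * (M 1 t x y * M 2 t x y - M 0 t x y * M 3 t x y)

/-- Signs of `Q` in the four Broadwell equations. -/
def sgn4 : Fin 4 → ℝ := ![1, -1, -1, 1]

/-- `x`-components of the four velocities. -/
def spX (c : ℝ) : Fin 4 → ℝ := ![c, 0, 0, -c]

/-- `y`-components of the four velocities. -/
def spY (c : ℝ) : Fin 4 → ℝ := ![0, c, -c, 0]

/-- Partial derivative in `t`. -/
def pdtF (f : ℝ → ℝ → ℝ → ℝ) (t x y : ℝ) : ℝ := deriv (fun s => f s x y) t

/-- Partial derivative in `x`. -/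
def pdxF (f : ℝ → ℝ → ℝ → ℝ) (t x y : ℝ) : ℝ := deriv (fun s => f t s y) x

/-- Partial derivative in `y`. -/
def pdyF (f : ℝ → ℝ → ℝ → ℝ) (t x y : ℝ) : ℝ := deriv (fun s => f t x s) y

/-- `f` possesses all three first-order partial derivatives at `p`. -/
def HasPartials (f : ℝ → ℝ → ℝ → ℝ) (p : ℝ × ℝ × ℝ) : Prop :=
  DifferentiableAt ℝ (fun s => f s p.2.1 p.2.2) p.1 ∧
  DifferentiableAt ℝ (fun s => f p.1 s p.2.2) p.2.1 ∧
  DifferentiableAt ℝ (fun s => f p.1 p.2.1 s) p.2.2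

/-- Continuity of a curried function of three real variables on a set. -/
def Cont3 (f : ℝ → ℝ → ℝ → ℝ) (D : Set (ℝ × ℝ × ℝ)) : Prop :=
  ContinuousOn (fun p : ℝ × ℝ × ℝ => f p.1 p.2.1 p.2.2) D

/-- Sup norm over `D` of a function of three variables. -/
def supNorm3 (D : Set (ℝ × ℝ × ℝ)) (f : ℝ → ℝ → ℝ → ℝ) : ℝ :=
  sSup ((fun p : ℝ × ℝ × ℝ => |f p.1 p.2.1 p.2.2|) '' D)

/-- `‖N‖ = max_i ‖N_i‖_∞` over `D`. -/
def norm4 (D : Set (ℝ × ℝ × ℝ)) (M : Fin 4 → ℝ → ℝ → ℝ → ℝ) : ℝ :=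
  max (max (supNorm3 D (M 0)) (supNorm3 D (M 1))) (max (supNorm3 D (M 2)) (supNorm3 D (M 3)))

/-- Sup norm over `D` of a function of two variables. -/
def supNorm2 (D : Set (ℝ × ℝ)) (f : ℝ → ℝ → ℝ) : ℝ :=
  sSup ((fun p : ℝ × ℝ => |f p.1 p.2|) '' D)

/-- `‖g‖₁` for a function of two variables: max of the sup norms of `g` and its two
first-order partial derivatives over `D`. -/
def norm1Two (D : Set (ℝ × ℝ)) (f : ℝ → ℝ → ℝ) : ℝ :=
  max (supNorm2 D f)
    (max (supNorm2 D (fun a b => deriv (fun u => f u b) a))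
      (supNorm2 D (fun a b => deriv (fun v => f a v) b)))

/-- The space-time slab `T × [a₁,b₁] × [a₂,b₂]`. -/
def PsetT (T : Set ℝ) (a₁ b₁ a₂ b₂ : ℝ) : Set (ℝ × ℝ × ℝ) := T ×ˢ Icc a₁ b₁ ×ˢ Icc a₂ b₂

/-- The spatial rectangle `[a₁,b₁] × [a₂,b₂]`. -/
def Rect2 (a₁ b₁ a₂ b₂ : ℝ) : Set (ℝ × ℝ) := Icc a₁ b₁ ×ˢ Icc a₂ b₂

/-- A function of two variables which is continuous and bounded on `D` with continuous
and bounded first-order partial derivatives on `D`. -/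
def Smooth2 (D : Set (ℝ × ℝ)) (f : ℝ → ℝ → ℝ) : Prop :=
  ContinuousOn (fun p : ℝ × ℝ => f p.1 p.2) D ∧
  (∀ p ∈ D, DifferentiableAt ℝ (fun u => f u p.2) p.1 ∧
    DifferentiableAt ℝ (fun v => f p.1 v) p.2) ∧
  ContinuousOn (fun p : ℝ × ℝ => deriv (fun u => f u p.2) p.1) D ∧
  ContinuousOn (fun p : ℝ × ℝ => deriv (fun v => f p.1 v) p.2) D ∧
  ∃ C, ∀ p ∈ D, |f p.1 p.2| ≤ C ∧
    |deriv (fun u => f u p.2) p.1| ≤ C ∧ |deriv (fun v => f p.1 v) p.2| ≤ C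

/-- Nonnegativity of a function of two variables on `D`. -/
def Nonneg2 (D : Set (ℝ × ℝ)) (f : ℝ → ℝ → ℝ) : Prop := ∀ p ∈ D, 0 ≤ f p.1 p.2

/-- The initial data `N0` and boundary data `B1, B2, B3, B4` are nonnegative, continuous
and bounded with continuous bounded first-order partial derivatives, and satisfy the
compatibility conditions at time `t0`. -/
def NiceData (T : Set ℝ) (t0 a₁ b₁ a₂ b₂ : ℝ) (N0 : Fin 4 → ℝ → ℝ → ℝ)
    (B1 B2 B3 B4 : ℝ → ℝ → ℝ) : Prop :=
  (∀ i, Smooth2 (Rect2 a₁ b₁ a₂ b₂) (N0 i) ∧ Nonneg2 (Rect2 a₁ b₁ a₂ b₂) (N0 i)) ∧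
  (Smooth2 (T ×ˢ Icc a₂ b₂) B1 ∧ Nonneg2 (T ×ˢ Icc a₂ b₂) B1) ∧
  (Smooth2 (T ×ˢ Icc a₁ b₁) B2 ∧ Nonneg2 (T ×ˢ Icc a₁ b₁) B2) ∧
  (Smooth2 (T ×ˢ Icc a₁ b₁) B3 ∧ Nonneg2 (T ×ˢ Icc a₁ b₁) B3) ∧
  (Smooth2 (T ×ˢ Icc a₂ b₂) B4 ∧ Nonneg2 (T ×ˢ Icc a₂ b₂) B4) ∧
  (∀ y ∈ Icc a₂ b₂, N0 0 a₁ y = B1 t0 y) ∧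
  (∀ x ∈ Icc a₁ b₁, N0 1 x a₂ = B2 t0 x) ∧
  (∀ x ∈ Icc a₁ b₁, N0 2 x b₂ = B3 t0 x) ∧
  (∀ y ∈ Icc a₂ b₂, N0 3 b₁ y = B4 t0 y)

/-- `N` is a classical solution of the initial-boundary value problem for the planar
four-velocity Broadwell model on `T × [a₁,b₁] × [a₂,b₂]`, with initial time `t0`,
initial data `N0` and boundary data `B1, B2, B3, B4`. -/
def IsSol (c S : ℝ) (T : Set ℝ) (t0 a₁ b₁ a₂ b₂ : ℝ) (N0 : Fin 4 → ℝ → ℝ → ℝ)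
    (B1 B2 B3 B4 : ℝ → ℝ → ℝ) (N : Fin 4 → ℝ → ℝ → ℝ → ℝ) : Prop :=
  (∀ i, Cont3 (N i) (PsetT T a₁ b₁ a₂ b₂)) ∧
  (∀ i, ∀ p ∈ interior (PsetT T a₁ b₁ a₂ b₂), HasPartials (N i) p) ∧
  (∀ i, ∀ p ∈ interior (PsetT T a₁ b₁ a₂ b₂),
    pdtF (N i) p.1 p.2.1 p.2.2 + spX c i * pdxF (N i) p.1 p.2.1 p.2.2 +
      spY c i * pdyF (N i) p.1 p.2.1 p.2.2 = sgn4 i * QQ c S N p.1 p.2.1 p.2.2) ∧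
  (∀ i, ∀ x ∈ Icc a₁ b₁, ∀ y ∈ Icc a₂ b₂, N i t0 x y = N0 i x y) ∧
  (∀ t ∈ T, ∀ y ∈ Icc a₂ b₂, N 0 t a₁ y = B1 t y) ∧
  (∀ t ∈ T, ∀ x ∈ Icc a₁ b₁, N 1 t x a₂ = B2 t x) ∧
  (∀ t ∈ T, ∀ x ∈ Icc a₁ b₁, N 2 t x b₂ = B3 t x) ∧
  (∀ t ∈ T, ∀ y ∈ Icc a₂ b₂, N 3 t b₁ y = B4 t y)

/-- The operator `𝒯`, defined by integration along the characteristics. -/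
def Tcal (c S τ a₁ b₁ a₂ b₂ : ℝ) (N0 : Fin 4 → ℝ → ℝ → ℝ) (B1 B2 B3 B4 : ℝ → ℝ → ℝ)
    (M : Fin 4 → ℝ → ℝ → ℝ → ℝ) : Fin 4 → ℝ → ℝ → ℝ → ℝ :=
  ![fun t x y =>
      if a₁ ≤ x - c * (t - τ) then
        (∫ s in τ..t, QQ c S M s (x + c * (s - t)) y) + N0 0 (x - c * (t - τ)) y
      else
        (∫ s in (t - (x - a₁) / c)..t, QQ c S M s (x + c * (s - t)) y) +
          B1 (t - (x - a₁) / c) y,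
    fun t x y =>
      if a₂ ≤ y - c * (t - τ) then
        (∫ s in τ..t, -QQ c S M s x (y + c * (s - t))) + N0 1 x (y - c * (t - τ))
      else
        (∫ s in (t - (y - a₂) / c)..t, -QQ c S M s x (y + c * (s - t))) +
          B2 (t - (y - a₂) / c) x,
    fun t x y =>
      if y + c * (t - τ) ≤ b₂ then
        (∫ s in τ..t, -QQ c S M s x (y - c * (s - t))) + N0 2 x (y + c * (t - τ))
      else
        (∫ s in (t - (b₂ - y) / c)..t, -QQ c S M s x (y - c * (s - t))) +
          B3 (t - (b₂ - y) / c) x,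
    fun t x y =>
      if x + c * (t - τ) ≤ b₁ then
        (∫ s in τ..t, QQ c S M s (x - c * (s - t)) y) + N0 3 (x + c * (t - τ)) y
      else
        (∫ s in (t - (b₁ - x) / c)..t, QQ c S M s (x - c * (s - t)) y) +
          B4 (t - (b₁ - x) / c) y]

/-- `ρ(|M|) = |M₁| + |M₂| + |M₃| + |M₄|`. -/
def rhoA (M : Fin 4 → ℝ → ℝ → ℝ → ℝ) (t x y : ℝ) : ℝ :=
  |M 0 t x y| + |M 1 t x y| + |M 2 t x y| + |M 3 t x y|

/-- `Q(|M|)`. -/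
def QQa (c S : ℝ) (M : Fin 4 → ℝ → ℝ → ℝ → ℝ) (t x y : ℝ) : ℝ :=
  2 * c * S * (|M 1 t x y| * |M 2 t x y| - |M 0 t x y| * |M 3 t x y|)

/-- `Q_i^σ(|M|) = σ ρ(|M|) |M_i| ± Q(|M|)`. -/
def Qsig (c S σ : ℝ) (i : Fin 4) (M : Fin 4 → ℝ → ℝ → ℝ → ℝ) (t x y : ℝ) : ℝ :=
  σ * rhoA M t x y * |M i t x y| + sgn4 i * QQa c S M t x y

/-- Duhamel formula with integrating factor along the `i`-th characteristic, starting at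
time `t0` with datum `datum`. -/
def duh (c S σ : ℝ) (i : Fin 4) (M : Fin 4 → ℝ → ℝ → ℝ → ℝ) (t0 t x y datum : ℝ) : ℝ :=
  ((∫ s in t0..t,
      Real.exp (σ * ∫ r in t0..s,
        rhoA M r (x + spX c i * (r - t)) (y + spY c i * (r - t))) *
        Qsig c S σ i M s (x + spX c i * (s - t)) (y + spY c i * (s - t))) + datum) *
    Real.exp (-(σ * ∫ s in t0..t, rhoA M s (x + spX c i * (s - t)) (y + spY c i * (s - t))))

/-- The operator `𝒯^σ`. -/
def Tsig (c S σ τ a₁ b₁ a₂ b₂ : ℝ) (N0 : Fin 4 → ℝ → ℝ → ℝ) (B1 B2 B3 B4 : ℝ → ℝ → ℝ)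
    (M : Fin 4 → ℝ → ℝ → ℝ → ℝ) : Fin 4 → ℝ → ℝ → ℝ → ℝ :=
  ![fun t x y =>
      if a₁ ≤ x - c * (t - τ) then duh c S σ 0 M τ t x y (N0 0 (x - c * (t - τ)) y)
      else duh c S σ 0 M (t - (x - a₁) / c) t x y (B1 (t - (x - a₁) / c) y),
    fun t x y =>
      if a₂ ≤ y - c * (t - τ) then duh c S σ 1 M τ t x y (N0 1 x (y - c * (t - τ)))
      else duh c S σ 1 M (t - (y - a₂) / c) t x y (B2 (t - (y - a₂) / c) x),
    fun t x y =>
      if y + c * (t - τ) ≤ b₂ then duh c S σ 2 M τ t x y (N0 2 x (y + c * (t - τ)))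
      else duh c S σ 2 M (t - (b₂ - y) / c) t x y (B3 (t - (b₂ - y) / c) x),
    fun t x y =>
      if x + c * (t - τ) ≤ b₁ then duh c S σ 3 M τ t x y (N0 3 (x + c * (t - τ)) y)
      else duh c S σ 3 M (t - (b₁ - x) / c) t x y (B4 (t - (b₁ - x) / c) y)]

/-- Complement of the four exceptional planes. -/
def offPlanes (c τ a₁ b₁ a₂ b₂ : ℝ) : Set (ℝ × ℝ × ℝ) :=
  {p | p.2.1 - c * (p.1 - τ) ≠ a₁ ∧ p.2.2 - c * (p.1 - τ) ≠ a₂ ∧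
    p.2.2 + c * (p.1 - τ) ≠ b₂ ∧ p.2.1 + c * (p.1 - τ) ≠ b₁}

/-- The interior of `𝒫` minus the four exceptional planes. -/
def Dset (c τ τ' a₁ b₁ a₂ b₂ : ℝ) : Set (ℝ × ℝ × ℝ) :=
  (Ioo τ τ' ×ˢ Ioo a₁ b₁ ×ˢ Ioo a₂ b₂) ∩ offPlanes c τ a₁ b₁ a₂ b₂

/-- `u` has first-order partial derivatives on `D`, continuous and bounded there. -/
def DerivReg (D : Set (ℝ × ℝ × ℝ)) (u : ℝ → ℝ → ℝ → ℝ) : Prop :=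
  (∀ p ∈ D, HasPartials u p) ∧
  Cont3 (pdtF u) D ∧ Cont3 (pdxF u) D ∧ Cont3 (pdyF u) D ∧
  ∃ C, ∀ p ∈ D, |pdtF u p.1 p.2.1 p.2.2| ≤ C ∧
    |pdxF u p.1 p.2.1 p.2.2| ≤ C ∧ |pdyF u p.1 p.2.1 p.2.2| ≤ C

/-- Membership in the space `E`: continuity on `𝒫` plus regularity of the first-order
partial derivatives off the four exceptional planes. -/
def memE (c τ τ' a₁ b₁ a₂ b₂ : ℝ) (u : ℝ → ℝ → ℝ → ℝ) : Prop :=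
  Cont3 u (PsetT (Icc τ τ') a₁ b₁ a₂ b₂) ∧ DerivReg (Dset c τ τ' a₁ b₁ a₂ b₂) u

/-- `‖u‖₁`: the max of the sup norm of `u` over `P` and of the sup norms of its
first-order partial derivatives over `D`. -/
def norm1E (P D : Set (ℝ × ℝ × ℝ)) (u : ℝ → ℝ → ℝ → ℝ) : ℝ :=
  max (supNorm3 P u)
    (max (supNorm3 D (pdtF u)) (max (supNorm3 D (pdxF u)) (supNorm3 D (pdyF u))))

/-- `𝒩(N) = max_i ‖N_i‖₁`. -/
def NN4 (P D : Set (ℝ × ℝ × ℝ)) (N : Fin 4 → ℝ → ℝ → ℝ → ℝ) : ℝ :=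
  max (max (norm1E P D (N 0)) (norm1E P D (N 1)))
    (max (norm1E P D (N 2)) (norm1E P D (N 3)))

/-- The convex set `𝓜_R = {N ∈ E⁴ : 𝒩(N) ≤ R}`. -/
def MR (c τ τ' a₁ b₁ a₂ b₂ R : ℝ) : Set (Fin 4 → ℝ → ℝ → ℝ → ℝ) :=
  {N | (∀ i, memE c τ τ' a₁ b₁ a₂ b₂ (N i)) ∧
    NN4 (PsetT (Icc τ τ') a₁ b₁ a₂ b₂) (Dset c τ τ' a₁ b₁ a₂ b₂) N ≤ R}

/-- The transported initial datum `N̄_i^τ`. -/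
def barN0 (c τ : ℝ) (N0 : Fin 4 → ℝ → ℝ → ℝ) (i : Fin 4) : ℝ → ℝ → ℝ → ℝ :=
  fun t x y => N0 i (x - spX c i * (t - τ)) (y - spY c i * (t - τ))

/-- The transported boundary data `N̄₁⁻, N̄₂⁻, N̄₃⁺, N̄₄⁺`. -/
def barB (c a₁ b₁ a₂ b₂ : ℝ) (B1 B2 B3 B4 : ℝ → ℝ → ℝ) : Fin 4 → ℝ → ℝ → ℝ → ℝ :=
  ![fun t x y => B1 (t - (x - a₁) / c) y,
    fun t x y => B2 (t - (y - a₂) / c) x,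
    fun t x y => B3 (t - (b₂ - y) / c) x,
    fun t x y => B4 (t - (b₁ - x) / c) y]

/-- Domain of definition of the transported initial datum `N̄_i^τ` inside `𝒫`. -/
def domBar0 (c τ a₁ b₁ a₂ b₂ : ℝ) (T : Set ℝ) (i : Fin 4) : Set (ℝ × ℝ × ℝ) :=
  PsetT T a₁ b₁ a₂ b₂ ∩
    {p | (p.2.1 - spX c i * (p.1 - τ), p.2.2 - spY c i * (p.1 - τ)) ∈ Rect2 a₁ b₁ a₂ b₂}

/-- Domains of definition of the transported boundary data inside `𝒫`. -/
def domBarB (c a₁ b₁ a₂ b₂ : ℝ) (T : Set ℝ) : Fin 4 → Set (ℝ × ℝ × ℝ) :=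
  ![PsetT T a₁ b₁ a₂ b₂ ∩ {p | p.1 - (p.2.1 - a₁) / c ∈ T},
    PsetT T a₁ b₁ a₂ b₂ ∩ {p | p.1 - (p.2.2 - a₂) / c ∈ T},
    PsetT T a₁ b₁ a₂ b₂ ∩ {p | p.1 - (b₂ - p.2.2) / c ∈ T},
    PsetT T a₁ b₁ a₂ b₂ ∩ {p | p.1 - (b₁ - p.2.1) / c ∈ T}]

/-- `‖N̄_i^τ‖₁`. -/
def nb0 (c τ a₁ b₁ a₂ b₂ : ℝ) (T : Set ℝ) (N0 : Fin 4 → ℝ → ℝ → ℝ) (i : Fin 4) : ℝ :=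
  norm1E (domBar0 c τ a₁ b₁ a₂ b₂ T i) (domBar0 c τ a₁ b₁ a₂ b₂ T i) (barN0 c τ N0 i)

/-- `‖N̄₁⁻‖₁`, `‖N̄₂⁻‖₁`, `‖N̄₃⁺‖₁`, `‖N̄₄⁺‖₁`. -/
def nbB (c a₁ b₁ a₂ b₂ : ℝ) (T : Set ℝ) (B1 B2 B3 B4 : ℝ → ℝ → ℝ) (i : Fin 4) : ℝ :=
  norm1E (domBarB c a₁ b₁ a₂ b₂ T i) (domBarB c a₁ b₁ a₂ b₂ T i)
    (barB c a₁ b₁ a₂ b₂ B1 B2 B3 B4 i)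

/-- `q`: the max of the `‖·‖₁` norms of the eight transported data functions. -/
def qval (c τ a₁ b₁ a₂ b₂ : ℝ) (T : Set ℝ) (N0 : Fin 4 → ℝ → ℝ → ℝ)
    (B1 B2 B3 B4 : ℝ → ℝ → ℝ) : ℝ :=
  max
    (max (max (nb0 c τ a₁ b₁ a₂ b₂ T N0 0) (nb0 c τ a₁ b₁ a₂ b₂ T N0 1))
      (max (nb0 c τ a₁ b₁ a₂ b₂ T N0 2) (nb0 c τ a₁ b₁ a₂ b₂ T N0 3)))
    (max (max (nbB c a₁ b₁ a₂ b₂ T B1 B2 B3 B4 0) (nbB c a₁ b₁ a₂ b₂ T B1 B2 B3 B4 1))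
      (max (nbB c a₁ b₁ a₂ b₂ T B1 B2 B3 B4 2) (nbB c a₁ b₁ a₂ b₂ T B1 B2 B3 B4 3)))

/-- `μ = 8 + 4/c + 8c`. -/
def muc (c : ℝ) : ℝ := 8 + 4 / c + 8 * c

/-- `λ = 16 + 16c`. -/
def lamc (c : ℝ) : ℝ := 16 + 16 * c

/-- `δ = 4/c + 8 + 4c`. -/
def delc (c : ℝ) : ℝ := 4 / c + 8 + 4 * c

/-- `γ = 1 + c + 1/c`. -/
def gamc (c : ℝ) : ℝ := 1 + c + 1 / c

/-- `p_σ = (μ + λ σ R₀ (τ'-τ))(σ + cS)`. -/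
def psig (c S σ R₀ τ τ' : ℝ) : ℝ := (muc c + lamc c * σ * R₀ * (τ' - τ)) * (σ + c * S)

/-- `q_σ = q (1 + δ σ R₀)`. -/
def qsig (c σ R₀ q : ℝ) : ℝ := q * (1 + delc c * σ * R₀)

/-- `max_i ‖N_i‖₁` for a solution: sup norms of the `N_i` over `Dom`, and of their
first-order partial derivatives over the interior of `Dom`. -/
def NNSol (Dom : Set (ℝ × ℝ × ℝ)) (N : Fin 4 → ℝ → ℝ → ℝ → ℝ) : ℝ :=
  NN4 Dom (interior Dom) N

/-!
Following the `i`-th characteristic backwards from `p` until it leaves the slab,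
`𝒯ᵢ(M)(p) = ± ∫ r in 0..ℓᵢ(p), Q(M)(p - r • wᵢ) + datum(p - ℓᵢ(p) • wᵢ)`, where `wᵢ` is the
space-time velocity and `ℓᵢ(p) = min (t - τ) (dᵢ(p) / c)`, `dᵢ` being the distance to the inflow
side. The `i`-th exceptional plane is where the two terms of the minimum agree.

Elements of `E` are Lipschitz, because a generic segment meets the exceptional planes in finitely
many points. A characteristic meets the planes transversal to it only finitely often, and a
characteristic inside a plane is excluded by the choice of `p`, so one may differentiate under the
integral: the derivative is `∫ ∂Q + Q(foot) ∂ℓᵢ` plus that of the datum. With `|Q| ≤ 4cSR²`,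
`|∂Q| ≤ 8cSR²`, `|∂ℓᵢ| ≤ 1 + 1/c` and `ℓᵢ ≤ τ' - τ` this gives the bound. The sets `𝓜_R` are
therefore uniformly bounded and equi-Lipschitz, and compactness is the Arzelà–Ascoli theorem.
-/

open Filter Topology NNReal

section Hyperplanes

variable {ι E F : Type*} [NormedAddCommGroup E] [NormedSpace ℝ E]
  [NormedAddCommGroup F] [NormedSpace ℝ F] [CompleteSpace F]

lemma norm_sub_le_of_norm_deriv_le_off_countable {f : ℝ → F} {a b C : ℝ} {s : Set ℝ} (hab : a ≤ b)
    (hs : s.Countable) (hf : ContinuousOn f (Icc a b))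
    (hd : ∀ x ∈ Ioo a b \ s, DifferentiableAt ℝ f x) (hC : ∀ x ∈ Ioo a b \ s, ‖deriv f x‖ ≤ C) :
    ‖f b - f a‖ ≤ C * (b - a) := by
  have bound : ∀ᵐ x, x ∈ uIoc a b → ‖deriv f x‖ ≤ C := by
    filter_upwards [hs.ae_notMem volume, measure_eq_zero_iff_ae_notMem.1 (measure_singleton b)]
      with x hxs hxb hx
    rw [uIoc_of_le hab] at hx
    exact hC x ⟨⟨hx.1, lt_of_le_of_ne hx.2 hxb⟩, hxs⟩
  have integrable : IntervalIntegrable (deriv f) volume a b :=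
    (intervalIntegrable_const (c := C)).mono_fun' (aestronglyMeasurable_deriv f _)
      ((ae_restrict_iff' measurableSet_uIoc).2 bound)
  rw [← integral_eq_of_hasDerivAt_off_countable_of_le f _ hab hs hf
    (fun x hx => (hd x hx).hasDerivAt) integrable, ← abs_of_nonneg (sub_nonneg.2 hab)]
  exact intervalIntegral.norm_integral_le_of_norm_le_const_ae bound

variable {L : ι → E →L[ℝ] ℝ} {k : ι → ℝ}

lemma finite_setOf_exists_apply_add_smul_eq [Finite ι] {p : E} (hp : ∀ i, L i p ≠ k i) (v : E) :
    {s : ℝ | ∃ i, L i (p + s • v) = k i}.Finite := by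
  rw [ofPred_exists]
  refine finite_iUnion fun i => Subsingleton.finite fun s hs t ht => ?_
  simp only [mem_ofPred_eq, map_add, map_smul, smul_eq_mul] at hs ht
  have hv : L i v ≠ 0 := fun h => hp i (by simpa [h] using hs)
  exact mul_right_cancel₀ hv (by linarith)

lemma dense_setOf_forall_apply_ne [CompleteSpace E] [Countable ι] (hL : ∀ i, L i ≠ 0) :
    Dense {p | ∀ i, L i p ≠ k i} := by
  rw [ofPred_forall]
  exact dense_iInter_of_isOpen (fun i => isOpen_compl_singleton.preimage (L i).continuous)
    fun i => (dense_compl_singleton (k i)).preimage ((L i).isOpenMap_of_ne_zero (hL i))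

lemma lipschitzOnWith_closure_of_fderiv_le_off_hyperplanes [CompleteSpace E] [Finite ι]
    (hL : ∀ i, L i ≠ 0) {A : Set E} (hA : IsOpen A) (hconv : Convex ℝ A) {u : E → F}
    (hu : ContinuousOn u (closure A)) {C : ℝ≥0}
    (hd : ∀ p ∈ A ∩ {p | ∀ i, L i p ≠ k i}, DifferentiableAt ℝ u p)
    (hC : ∀ p ∈ A ∩ {p | ∀ i, L i p ≠ k i}, ‖fderiv ℝ u p‖ ≤ C) :
    LipschitzOnWith C u (closure A) := by
  have closure_eq : closure (A ∩ {p | ∀ i, L i p ≠ k i}) = closure A :=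
    (closure_mono inter_subset_left).antisymm
      (closure_minimal ((dense_setOf_forall_apply_ne hL).open_subset_closure_inter hA)
        isClosed_closure)
  rw [← closure_eq] at hu ⊢
  refine (lipschitzOnWith_closure_iff hu).2 (LipschitzOnWith.of_dist_le_mul fun q hq p hp => ?_)
  have line_mem : ∀ s ∈ Icc (0 : ℝ) 1, p + s • (q - p) ∈ A := fun s hs =>
    hconv.add_smul_sub_mem hp.1 hq.1 hs
  have hline : ∀ s, HasDerivAt (fun s : ℝ => p + s • (q - p)) (q - p) s := fun s => by
    simpa using ((hasDerivAt_id s).smul_const (q - p)).const_add p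
  have regular : ∀ s ∈ Ioo (0 : ℝ) 1 \ {s | ∃ i, L i (p + s • (q - p)) = k i},
      p + s • (q - p) ∈ A ∩ {p | ∀ i, L i p ≠ k i} := fun s hs =>
    ⟨line_mem s (Ioo_subset_Icc_self hs.1), not_exists.1 hs.2⟩
  have hderiv : ∀ s ∈ Ioo (0 : ℝ) 1 \ {s | ∃ i, L i (p + s • (q - p)) = k i},
      HasDerivAt (fun s => u (p + s • (q - p))) (fderiv ℝ u (p + s • (q - p)) (q - p)) s :=
    fun s hs => (hd _ (regular s hs)).hasFDerivAt.comp_hasDerivAt s (hline s)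
  have := norm_sub_le_of_norm_deriv_le_off_countable (f := fun s : ℝ => u (p + s • (q - p)))
    (C := C * ‖q - p‖) zero_le_one
    (finite_setOf_exists_apply_add_smul_eq hp.2 (q - p)).countable
    ((hu.mono (subset_closure.trans closure_eq.symm.subset)).comp
      (fun s _ => (hline s).continuousAt.continuousWithinAt) line_mem)
    (fun s hs => (hderiv s hs).differentiableAt) fun s hs => by
      rw [(hderiv s hs).deriv]
      exact (ContinuousLinearMap.le_opNorm _ _).trans
        (mul_le_mul_of_nonneg_right (hC _ (regular s hs)) (norm_nonneg _))
  simpa [dist_eq_norm] using this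

end Hyperplanes

section TransportIntegral

variable {E F : Type*} [NormedAddCommGroup E] [NormedSpace ℝ E]
  [NormedAddCommGroup F] [NormedSpace ℝ F]

lemma hasFDerivAt_integral_moving_endpoint [CompleteSpace F] {k : E → ℝ → F} {ℓ : E → ℝ}
    {ℓ' : E →L[ℝ] ℝ} {p : E} (hk : ContinuousAt (Function.uncurry k) (p, ℓ p))
    (hint : ∀ q, IntervalIntegrable (k q) volume (ℓ p) (ℓ q)) (hℓ : HasFDerivAt ℓ ℓ' p) :
    HasFDerivAt (fun q => ∫ r in ℓ p..ℓ q, k q r) (ℓ'.smulRight (k p (ℓ p))) p := by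
  have frozen_integrand : (fun q => (∫ r in ℓ p..ℓ q, k q r) - (ℓ q - ℓ p) • k p (ℓ p))
      =o[𝓝 p] fun q => ℓ q - ℓ p := by
    refine Asymptotics.isLittleO_iff.2 fun ε hε => ?_
    obtain ⟨δ, hδ, hkδ⟩ := Metric.continuousAt_iff.1 hk ε hε
    filter_upwards [Metric.ball_mem_nhds p hδ,
      hℓ.continuousAt (Metric.ball_mem_nhds (ℓ p) hδ)] with q hq hℓq
    have close : ∀ r ∈ uIoc (ℓ p) (ℓ q), ‖k q r - k p (ℓ p)‖ ≤ ε := fun r hr => by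
      have hr : |r - ℓ p| ≤ |ℓ q - ℓ p| := abs_sub_left_of_mem_uIcc (uIoc_subset_uIcc hr)
      exact (dist_eq_norm (k q r) _ ▸ hkδ (x := (q, r))
        (max_lt hq (hr.trans_lt hℓq))).le
    rw [← intervalIntegral.integral_const,
      ← intervalIntegral.integral_sub (hint q) intervalIntegrable_const]
    exact intervalIntegral.norm_integral_le_of_norm_le_const close
  have correction : HasFDerivAt (fun q => (∫ r in ℓ p..ℓ q, k q r) - (ℓ q - ℓ p) • k p (ℓ p))
      (0 : E →L[ℝ] F) p :=
    .of_isLittleO (by simpa using frozen_integrand.trans_isBigO hℓ.isBigO_sub)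
  refine HasFDerivAt.congr_of_eventuallyEq (f := _ + fun q => (ℓ q - ℓ p) • k p (ℓ p)) ?_
    (.of_forall fun q => (sub_add_cancel _ _).symm)
  simpa using correction.add ((hℓ.sub_const (ℓ p)).smul_const (k p (ℓ p)))

/-- The integral of `g` along the backward ray `r ↦ p - r • w`, over the travel time `ℓ p`. -/
def transportIntegral (g : E → F) (w : E) (ℓ : E → ℝ) (p : E) : F :=
  ∫ r in (0 : ℝ)..ℓ p, g (p - r • w)

variable {g : E → F} {w p : E} {ℓ : E → ℝ} {C : ℝ≥0}

lemma continuous_transportIntegral (hg : Continuous g) (hℓ : Continuous ℓ) :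
    Continuous (transportIntegral g w ℓ) :=
  intervalIntegral.continuous_parametric_intervalIntegral_of_continuous (by fun_prop) hℓ

lemma norm_transportIntegral_le {C : ℝ} (hℓ : 0 ≤ ℓ p)
    (hg : ∀ᵐ r, r ∈ Ioc 0 (ℓ p) → ‖g (p - r • w)‖ ≤ C) :
    ‖transportIntegral g w ℓ p‖ ≤ C * ℓ p := by
  simpa [transportIntegral, abs_of_nonneg hℓ] using
    intervalIntegral.norm_integral_le_of_norm_le_const_ae
    (a := 0) (b := ℓ p) (f := fun r => g (p - r • w)) (by rwa [uIoc_of_le hℓ])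

lemma continuousAt_transportIntegral {C : ℝ} (hg : ∀ p, ‖g p‖ ≤ C)
    (hmeas : ∀ p, AEStronglyMeasurable fun r : ℝ => g (p - r • w)) (hℓ : ContinuousAt ℓ p)
    (hcont : ∀ᵐ r, r ∈ uIoc 0 (ℓ p) → ContinuousAt g (p - r • w)) :
    ContinuousAt (transportIntegral g w ℓ) p := by
  have integrable : ∀ q a b, IntervalIntegrable (fun r : ℝ => g (q - r • w)) volume a b :=
    fun q a b => (intervalIntegrable_const (c := C)).mono_fun' (hmeas q).restrict
      (.of_forall fun r => hg _)
  have split : transportIntegral g w ℓ = fun q =>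
      (∫ r in (0 : ℝ)..ℓ p, g (q - r • w)) + ∫ r in ℓ p..ℓ q, g (q - r • w) := funext fun q =>
    (intervalIntegral.integral_add_adjacent_intervals (integrable ..) (integrable ..)).symm
  rw [split]
  refine ContinuousAt.add ?_ ?_
  · refine intervalIntegral.continuousAt_of_dominated_interval (bound := fun _ => C)
      (.of_forall fun q => (hmeas q).restrict) (.of_forall fun q => .of_forall fun r _ => hg _)
      intervalIntegrable_const (hcont.mono fun r hr hmem => ?_)
    exact (hr hmem).comp (f := fun q => q - r • w) (by fun_prop)
  · have small : Tendsto (fun q => C * |ℓ q - ℓ p|) (𝓝 p) (𝓝 0) := by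
      simpa using (hℓ.tendsto.sub_const (ℓ p)).abs.const_mul C
    rw [ContinuousAt, intervalIntegral.integral_same]
    exact squeeze_zero_norm
      (fun q => intervalIntegral.norm_integral_le_of_norm_le_const fun r _ => hg _) small

variable [FiniteDimensional ℝ E] [FiniteDimensional ℝ F]

lemma aestronglyMeasurable_fderiv_comp_sub_smul (g : E → F) (p w : E) :
    AEStronglyMeasurable fun r : ℝ => fderiv ℝ g (p - r • w) := by
  borelize E
  borelize (E →L[ℝ] F)
  exact ((measurable_fderiv ℝ g).comp (by fun_prop)).aestronglyMeasurable

lemma norm_transportIntegral_fderiv_apply_le {e : E} {K : ℝ} (hg : LipschitzWith C g)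
    (hℓ : 0 ≤ ℓ p) (hK : ∀ᵐ r, r ∈ Ioc 0 (ℓ p) → ‖fderiv ℝ g (p - r • w) e‖ ≤ K) :
    ‖transportIntegral (fderiv ℝ g) w ℓ p e‖ ≤ K * ℓ p := by
  have integrable : IntervalIntegrable (fun r : ℝ => fderiv ℝ g (p - r • w)) volume 0 (ℓ p) :=
    (intervalIntegrable_const (c := (C : ℝ))).mono_fun'
      (aestronglyMeasurable_fderiv_comp_sub_smul g p w).restrict
      (.of_forall fun r => norm_fderiv_le_of_lipschitz ℝ hg)
  rw [transportIntegral, ContinuousLinearMap.intervalIntegral_apply integrable]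
  exact norm_transportIntegral_le (g := fun q => fderiv ℝ g q e) hℓ hK

lemma hasFDerivAt_transportIntegral {ℓ' : E →L[ℝ] ℝ} (hg : LipschitzWith C g)
    (hℓ : HasFDerivAt ℓ ℓ' p)
    (hd : ∀ᵐ r, r ∈ uIoc 0 (ℓ p) → DifferentiableAt ℝ g (p - r • w)) :
    HasFDerivAt (transportIntegral g w ℓ)
      (transportIntegral (fderiv ℝ g) w ℓ p + ℓ'.smulRight (g (p - ℓ p • w))) p := by
  have hcont : ∀ q, Continuous fun r : ℝ => g (q - r • w) := fun q =>
    hg.continuous.comp (by fun_prop)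
  have fixed_time : HasFDerivAt (fun q => ∫ r in (0 : ℝ)..ℓ p, g (q - r • w))
      (transportIntegral (fderiv ℝ g) w ℓ p) p := by
    refine (intervalIntegral.hasFDerivAt_integral_of_dominated_loc_of_lip (bound := fun _ => C)
      univ_mem (.of_forall fun q => (hcont q).aestronglyMeasurable)
      ((hcont p).intervalIntegrable _ _) (aestronglyMeasurable_fderiv_comp_sub_smul g p w).restrict
      (.of_forall fun r _ => ?_) intervalIntegrable_const (hd.mono fun r hr hmem => ?_)).2
    · rw [Real.nnabs_coe]
      exact fun a _ b _ => by simpa using hg (a - r • w) (b - r • w)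
    · exact (hr hmem).hasFDerivAt.comp p ((hasFDerivAt_id p).sub_const (r • w))
  have moving_endpoint : HasFDerivAt (fun q => ∫ r in ℓ p..ℓ q, g (q - r • w))
      (ℓ'.smulRight (g (p - ℓ p • w))) p :=
    hasFDerivAt_integral_moving_endpoint (k := fun q r => g (q - r • w))
      (hg.continuous.comp (by fun_prop)).continuousAt
      (fun q => (hcont q).intervalIntegrable _ _) hℓ
  have split : transportIntegral g w ℓ = fun q =>
      (∫ r in (0 : ℝ)..ℓ p, g (q - r • w)) + ∫ r in ℓ p..ℓ q, g (q - r • w) := funext fun q =>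
    (intervalIntegral.integral_add_adjacent_intervals ((hcont q).intervalIntegrable _ _)
      ((hcont q).intervalIntegrable _ _)).symm
  exact split ▸ fixed_time.add moving_endpoint

lemma contDiffOn_transportIntegral {O : Set E} (hO : IsOpen O)
    (hg : LipschitzWith C g) (hℓ : ContDiffOn ℝ 1 ℓ O)
    (hd : ∀ p ∈ O, ∀ᵐ r, r ∈ uIoc 0 (ℓ p) → ContDiffAt ℝ 1 g (p - r • w)) :
    ContDiffOn ℝ 1 (transportIntegral g w ℓ) O := by
  have hℓ' : ∀ p ∈ O, HasFDerivAt ℓ (fderiv ℝ ℓ p) p := fun p hp =>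
    ((hℓ.contDiffAt (hO.mem_nhds hp)).differentiableAt one_ne_zero).hasFDerivAt
  have hderiv : ∀ p ∈ O, HasFDerivAt (transportIntegral g w ℓ)
      (transportIntegral (fderiv ℝ g) w ℓ p + (fderiv ℝ ℓ p).smulRight (g (p - ℓ p • w))) p :=
    fun p hp => hasFDerivAt_transportIntegral hg (hℓ' p hp)
      ((hd p hp).mono fun r hr hmem => (hr hmem).differentiableAt one_ne_zero)
  refine fun p hp => (contDiffAt_one_iff.2
    ⟨_, O, hO.mem_nhds hp, fun p hp => ?_, hderiv⟩).contDiffWithinAt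
  refine ContinuousAt.continuousWithinAt (.add ?_ ?_)
  · refine continuousAt_transportIntegral (fun q => norm_fderiv_le_of_lipschitz ℝ hg)
      (fun q => aestronglyMeasurable_fderiv_comp_sub_smul g q w) (hℓ' p hp).continuousAt
      ((hd p hp).mono fun r hr hmem => (hr hmem).continuousAt_fderiv one_ne_zero)
  · have hfderiv := (hℓ.continuousOn_fderiv_of_isOpen hO le_rfl).continuousAt (hO.mem_nhds hp)
    have hfoot : ContinuousAt (fun q => g (q - ℓ q • w)) p :=
      hg.continuous.continuousAt.comp
        (continuousAt_id.sub ((hℓ' p hp).continuousAt.smul continuousAt_const))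
    exact ((ContinuousLinearMap.smulRightL ℝ E F).continuous₂.tendsto (_, _)).comp
      (hfderiv.tendsto.prodMk_nhds hfoot)

end TransportIntegral

lemma exists_subseq_tendstoUniformlyOn_of_lipschitzOnWith {X Y : Type*} [PseudoMetricSpace X]
    [MetricSpace Y] {s : Set X} (hs : IsCompact s) {t : Set Y} (ht : IsCompact t) {C : ℝ≥0}
    {u : ℕ → X → Y} (hu : ∀ n, LipschitzOnWith C (u n) s) (hst : ∀ n, MapsTo (u n) s t) :
    ∃ φ : ℕ → ℕ, StrictMono φ ∧ ∃ v : X → Y, ContinuousOn v s ∧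
      TendstoUniformlyOn (fun n => u (φ n)) v atTop s := by
  have : CompactSpace s := isCompact_iff_compactSpace.1 hs
  have hlip : ∀ n, LipschitzWith C (s.domRestrict (u n)) := fun n => (hu n).to_restrict
  let f : ℕ → BoundedContinuousFunction s Y := fun n => .mkOfCompact ⟨_, (hlip n).continuous⟩
  have compact_closure : IsCompact (closure (range f)) := by
    refine BoundedContinuousFunction.arzela_ascoli t ht _ ?_ ?_
    · rintro _ x ⟨n, rfl⟩
      exact hst n x.2
    · refine (LipschitzWith.uniformEquicontinuous _ C ?_).equicontinuous
      rintro ⟨_, n, rfl⟩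
      exact hlip n
  obtain ⟨g, -, φ, hφ, hg⟩ :=
    compact_closure.tendsto_subseq fun n => subset_closure (mem_range_self n)
  have extend_eq : Function.extend Subtype.val g (u 0) ∘ Subtype.val = g :=
    Function.extend_comp Subtype.val_injective g (u 0)
  refine ⟨φ, hφ, Function.extend Subtype.val g (u 0), ?_, ?_⟩
  · rw [continuousOn_iff_continuous_domRestrict, domRestrict_eq, extend_eq]
    exact g.continuous
  · rw [tendstoUniformlyOn_iff_tendstoUniformly_comp_coe, extend_eq]
    exact BoundedContinuousFunction.tendsto_iff_tendstoUniformly.1 hg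

section PartialDerivatives

/-- The function on `ℝ × ℝ × ℝ` underlying a curried function of three real variables. -/
abbrev uncurry3 (u : ℝ → ℝ → ℝ → ℝ) : ℝ × ℝ × ℝ → ℝ := fun p => u p.1 p.2.1 p.2.2

/-- The three coordinate directions, in the order `t`, `x`, `y`. -/
def coordDir : Fin 3 → ℝ × ℝ × ℝ := ![(1, 0, 0), (0, 1, 0), (0, 0, 1)]

/-- The linear form on `ℝ × ℝ × ℝ` whose coefficients are the partial derivatives of `u` at `p`. -/
def gradForm (u : ℝ → ℝ → ℝ → ℝ) (p : ℝ × ℝ × ℝ) : ℝ × ℝ × ℝ →L[ℝ] ℝ :=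
  uncurry3 (pdtF u) p • .fst ℝ ℝ (ℝ × ℝ) +
    (uncurry3 (pdxF u) p • .fst ℝ ℝ ℝ + uncurry3 (pdyF u) p • .snd ℝ ℝ ℝ) ∘L .snd ℝ ℝ (ℝ × ℝ)

lemma norm_le_of_abs_apply_coordDir_le {L : ℝ × ℝ × ℝ →L[ℝ] ℝ} {K : ℝ}
    (h : ∀ k, |L (coordDir k)| ≤ K) : ‖L‖ ≤ 3 * K := by
  have hK : 0 ≤ K := (abs_nonneg _).trans (h 0)
  refine L.opNorm_le_bound (by positivity) fun v => ?_
  have expand : L v = v.1 * L (coordDir 0) + v.2.1 * L (coordDir 1) + v.2.2 * L (coordDir 2) := by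
    simp only [← smul_eq_mul, ← map_smul, ← map_add]
    simp [coordDir]
  have term (s : ℝ) (k : Fin 3) (hs : |s| ≤ ‖v‖) : |s * L (coordDir k)| ≤ ‖v‖ * K := by
    rw [abs_mul]
    exact mul_le_mul hs (h k) (abs_nonneg _) (norm_nonneg _)
  have h0 := term v.1 0 (norm_fst_le v)
  have h1 := term v.2.1 1 ((norm_fst_le v.2).trans (norm_snd_le v))
  have h2 := term v.2.2 2 ((norm_snd_le v.2).trans (norm_snd_le v))
  rw [expand, Real.norm_eq_abs]
  linarith [abs_add_three (v.1 * L (coordDir 0)) (v.2.1 * L (coordDir 1))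
    (v.2.2 * L (coordDir 2))]

variable {u : ℝ → ℝ → ℝ → ℝ} {D : Set (ℝ × ℝ × ℝ)} {p : ℝ × ℝ × ℝ}

lemma hasDerivAt_slices {d : Fin 3 → ℝ}
    (h : ∀ k, HasLineDerivAt ℝ (uncurry3 u) (d k) p (coordDir k)) :
    HasDerivAt (fun s => u s p.2.1 p.2.2) (d 0) p.1 ∧
      HasDerivAt (fun s => u p.1 s p.2.2) (d 1) p.2.1 ∧
      HasDerivAt (fun s => u p.1 p.2.1 s) (d 2) p.2.2 := by
  have shift (k : Fin 3) (s : ℝ) :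
      HasDerivAt (fun r => uncurry3 u (p + (r - s) • coordDir k)) (d k) s :=
    HasDerivAt.comp_sub_const s s (by rw [sub_self]; exact h k)
  refine ⟨?_, ?_, ?_⟩
  · simpa [coordDir, uncurry3] using shift 0 p.1
  · simpa [coordDir, uncurry3] using shift 1 p.2.1
  · simpa [coordDir, uncurry3] using shift 2 p.2.2

lemma HasPartials.of_hasLineDerivAt {d : Fin 3 → ℝ}
    (h : ∀ k, HasLineDerivAt ℝ (uncurry3 u) (d k) p (coordDir k)) : HasPartials u p :=
  have ⟨ht, hx, hy⟩ := hasDerivAt_slices h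
  ⟨ht.differentiableAt, hx.differentiableAt, hy.differentiableAt⟩

lemma partials_eq_of_hasLineDerivAt {d : Fin 3 → ℝ}
    (h : ∀ k, HasLineDerivAt ℝ (uncurry3 u) (d k) p (coordDir k)) :
    uncurry3 (pdtF u) p = d 0 ∧ uncurry3 (pdxF u) p = d 1 ∧ uncurry3 (pdyF u) p = d 2 :=
  have ⟨ht, hx, hy⟩ := hasDerivAt_slices h
  ⟨ht.deriv, hx.deriv, hy.deriv⟩

lemma partials_eq_fderiv (h : DifferentiableAt ℝ (uncurry3 u) p) :
    uncurry3 (pdtF u) p = fderiv ℝ (uncurry3 u) p (coordDir 0) ∧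
      uncurry3 (pdxF u) p = fderiv ℝ (uncurry3 u) p (coordDir 1) ∧
      uncurry3 (pdyF u) p = fderiv ℝ (uncurry3 u) p (coordDir 2) :=
  partials_eq_of_hasLineDerivAt fun k => h.hasFDerivAt.hasLineDerivAt (coordDir k)

lemma hasFDerivAt_of_continuous_partials (hD : IsOpen D) (h : ∀ p ∈ D, HasPartials u p)
    (ht : Cont3 (pdtF u) D) (hx : Cont3 (pdxF u) D) (hy : Cont3 (pdyF u) D) (hp : p ∈ D) :
    HasFDerivAt (uncurry3 u) (gradForm u p) p := by
  have hcont {g : ℝ → ℝ → ℝ → ℝ} (hg : Cont3 g D) {q : ℝ × ℝ × ℝ} (hq : q ∈ D) :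
      ContinuousAt (uncurry3 g) q := ContinuousOn.continuousAt hg (hD.mem_nhds hq)
  have spatial : ∀ q ∈ D, HasFDerivAt (fun v : ℝ × ℝ => u q.1 v.1 v.2)
      (uncurry3 (pdxF u) q • .fst ℝ ℝ ℝ + uncurry3 (pdyF u) q • .snd ℝ ℝ ℝ) q.2 := by
    intro q hq
    have hDq : ∀ᶠ v in 𝓝 q.2, (q.1, v) ∈ D :=
      (Continuous.prodMk_right q.1).continuousAt.eventually_mem (hD.mem_nhds hq)
    refine (hasStrictFDerivAt_uncurry_coprod (f := fun x y => u q.1 x y) (u := q.2)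
      (f₁ := fun x y => .toSpanSingleton ℝ (pdxF u q.1 x y))
      (f₂ := fun x y => .toSpanSingleton ℝ (pdyF u q.1 x y))
      (hDq.mono fun v hv => (h _ hv).2.1.hasDerivAt.hasFDerivAt)
      (hDq.mono fun v hv => (h _ hv).2.2.hasDerivAt.hasFDerivAt)
      ?_ ?_).hasFDerivAt.congr_fderiv ?_
    · exact (ContinuousLinearMap.toSpanSingletonCLE (𝕜 := ℝ)).continuous.continuousAt.comp
        ((hcont hx hq).comp (Continuous.prodMk_right q.1).continuousAt)
    · exact (ContinuousLinearMap.toSpanSingletonCLE (𝕜 := ℝ)).continuous.continuousAt.comp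
        ((hcont hy hq).comp (Continuous.prodMk_right q.1).continuousAt)
    · ext <;> simp [uncurry3, Function.HasUncurry.uncurry]
  refine (hasStrictFDerivAt_uncurry_coprod (f := fun t v => u t v.1 v.2) (u := p)
    (f₁ := fun t v => .toSpanSingleton ℝ (pdtF u t v.1 v.2))
    (f₂ := fun t v => pdxF u t v.1 v.2 • ContinuousLinearMap.fst ℝ ℝ ℝ +
      pdyF u t v.1 v.2 • ContinuousLinearMap.snd ℝ ℝ ℝ)
    ((hD.eventually_mem hp).mono fun q hq => (h _ hq).1.hasDerivAt.hasFDerivAt)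
    ((hD.eventually_mem hp).mono spatial) ?_ ?_).hasFDerivAt.congr_fderiv ?_
  · exact (ContinuousLinearMap.toSpanSingletonCLE (𝕜 := ℝ)).continuous.continuousAt.comp
      (hcont ht hp)
  · exact ((hcont hx hp).smul continuousAt_const).add ((hcont hy hp).smul continuousAt_const)
  · ext <;> simp [gradForm, uncurry3, Function.HasUncurry.uncurry]

lemma contDiffOn_uncurry3_iff (hD : IsOpen D) : ContDiffOn ℝ 1 (uncurry3 u) D ↔
    (∀ p ∈ D, HasPartials u p) ∧ Cont3 (pdtF u) D ∧ Cont3 (pdxF u) D ∧ Cont3 (pdyF u) D := by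
  constructor
  · intro hu
    have hdiff : ∀ p ∈ D, DifferentiableAt ℝ (uncurry3 u) p := fun p hp =>
      (hu.contDiffAt (hD.mem_nhds hp)).differentiableAt one_ne_zero
    have hcont (k : Fin 3) : ContinuousOn (fun p => fderiv ℝ (uncurry3 u) p (coordDir k)) D :=
      (hu.continuousOn_fderiv_of_isOpen hD le_rfl).clm_apply continuousOn_const
    exact ⟨fun p hp => .of_hasLineDerivAt
        fun k => (hdiff p hp).hasFDerivAt.hasLineDerivAt (coordDir k),
      (hcont 0).congr fun p hp => (partials_eq_fderiv (hdiff p hp)).1,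
      (hcont 1).congr fun p hp => (partials_eq_fderiv (hdiff p hp)).2.1,
      (hcont 2).congr fun p hp => (partials_eq_fderiv (hdiff p hp)).2.2⟩
  · rintro ⟨h, ht, hx, hy⟩ p hp
    refine (contDiffAt_one_iff.2 ⟨gradForm u, D, hD.mem_nhds hp, ?_, fun q hq =>
      hasFDerivAt_of_continuous_partials hD h ht hx hy hq⟩).contDiffWithinAt
    exact (ht.smul continuousOn_const).add
      (((hx.smul continuousOn_const).add (hy.smul continuousOn_const)).clm_comp
        continuousOn_const)

end PartialDerivatives

section Norms

variable {P D : Set (ℝ × ℝ × ℝ)} {K : ℝ} {u : ℝ → ℝ → ℝ → ℝ}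

lemma supNorm3_nonneg (D : Set (ℝ × ℝ × ℝ)) (u : ℝ → ℝ → ℝ → ℝ) : 0 ≤ supNorm3 D u :=
  Real.sSup_nonneg (forall_mem_image.2 fun _ _ => abs_nonneg _)

lemma supNorm3_le (hK : 0 ≤ K) (h : ∀ p ∈ D, |uncurry3 u p| ≤ K) : supNorm3 D u ≤ K :=
  Real.sSup_le (forall_mem_image.2 h) hK

lemma abs_le_supNorm3 (h : ∃ C, ∀ p ∈ D, |uncurry3 u p| ≤ C) {p : ℝ × ℝ × ℝ} (hp : p ∈ D) :
    |uncurry3 u p| ≤ supNorm3 D u :=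
  le_csSup (h.imp fun _ hC => forall_mem_image.2 hC) (mem_image_of_mem _ hp)

lemma norm1E_nonneg (P D : Set (ℝ × ℝ × ℝ)) (u : ℝ → ℝ → ℝ → ℝ) : 0 ≤ norm1E P D u :=
  (supNorm3_nonneg P u).trans (le_max_left _ _)

lemma NN4_le_iff {N : Fin 4 → ℝ → ℝ → ℝ → ℝ} : NN4 P D N ≤ K ↔ ∀ i, norm1E P D (N i) ≤ K := by
  simp [NN4, Fin.forall_fin_succ, and_assoc]

lemma NN4_nonneg (P D : Set (ℝ × ℝ × ℝ)) (N : Fin 4 → ℝ → ℝ → ℝ → ℝ) : 0 ≤ NN4 P D N :=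
  (norm1E_nonneg P D _).trans (NN4_le_iff.1 le_rfl 0)

end Norms

section BoundedC1On

/-- Continuity and boundedness on `A` together with `DerivReg` on `B`: the regularity under which
all suprema in `norm1E A B u` are finite. -/
structure RegularOn (A B : Set (ℝ × ℝ × ℝ)) (u : ℝ → ℝ → ℝ → ℝ) : Prop where
  cont : Cont3 u A
  bounded : ∃ C, ∀ p ∈ A, |uncurry3 u p| ≤ C
  derivReg : DerivReg B u

/-- `U` is continuous on `P` with `|U| ≤ K₀` there, and `C¹` on `D` with each of its three partial
derivatives bounded by `K` there. This separates the bounds that `norm1E` merges into one. -/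
structure BoundedC1On (P D : Set (ℝ × ℝ × ℝ)) (K₀ K : ℝ) (U : ℝ × ℝ × ℝ → ℝ) : Prop where
  continuousOn : ContinuousOn U P
  abs_le : ∀ p ∈ P, |U p| ≤ K₀
  contDiffOn : ContDiffOn ℝ 1 U D
  abs_fderiv_le : ∀ p ∈ D, ∀ k, |fderiv ℝ U p (coordDir k)| ≤ K

variable {P D A B : Set (ℝ × ℝ × ℝ)} {K₀ K K₀' K' : ℝ} {U V : ℝ × ℝ × ℝ → ℝ}
  {u : ℝ → ℝ → ℝ → ℝ}

namespace BoundedC1On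

lemma mono (h : BoundedC1On P D K₀ K U) (h₀ : K₀ ≤ K₀') (h₁ : K ≤ K') :
    BoundedC1On P D K₀' K' U :=
  ⟨h.continuousOn, fun p hp => (h.abs_le p hp).trans h₀, h.contDiffOn,
    fun p hp k => (h.abs_fderiv_le p hp k).trans h₁⟩

lemma contDiffAt (h : BoundedC1On P D K₀ K U) (hD : IsOpen D) {p : ℝ × ℝ × ℝ} (hp : p ∈ D) :
    ContDiffAt ℝ 1 U p :=
  h.contDiffOn.contDiffAt (hD.mem_nhds hp)

lemma differentiableAt (h : BoundedC1On P D K₀ K U) (hD : IsOpen D) {p : ℝ × ℝ × ℝ} (hp : p ∈ D) :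
    DifferentiableAt ℝ U p :=
  (h.contDiffAt hD hp).differentiableAt one_ne_zero

lemma congr (h : BoundedC1On P D K₀ K U) (hD : IsOpen D) (hDP : D ⊆ P) (hUV : EqOn V U P) :
    BoundedC1On P D K₀ K V where
  continuousOn := h.continuousOn.congr hUV
  abs_le p hp := hUV hp ▸ h.abs_le p hp
  contDiffOn := h.contDiffOn.congr (hUV.mono hDP)
  abs_fderiv_le p hp k := by
    rw [((hUV.mono hDP).eventuallyEq_of_mem (hD.mem_nhds hp)).fderiv_eq]
    exact h.abs_fderiv_le p hp k

lemma add (hU : BoundedC1On P D K₀ K U) (hV : BoundedC1On P D K₀' K' V) (hD : IsOpen D) :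
    BoundedC1On P D (K₀ + K₀') (K + K') (fun p => U p + V p) where
  continuousOn := hU.continuousOn.add hV.continuousOn
  abs_le p hp := (abs_add_le _ _).trans (add_le_add (hU.abs_le p hp) (hV.abs_le p hp))
  contDiffOn := hU.contDiffOn.add hV.contDiffOn
  abs_fderiv_le p hp k := by
    rw [fderiv_fun_add (hU.differentiableAt hD hp) (hV.differentiableAt hD hp)]
    exact (abs_add_le _ _).trans (add_le_add (hU.abs_fderiv_le p hp k) (hV.abs_fderiv_le p hp k))

lemma const_mul (h : BoundedC1On P D K₀ K U) (hD : IsOpen D) (a : ℝ) :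
    BoundedC1On P D (|a| * K₀) (|a| * K) (fun p => a * U p) where
  continuousOn := continuousOn_const.mul h.continuousOn
  abs_le p hp := (abs_mul a _).trans_le (mul_le_mul_of_nonneg_left (h.abs_le p hp) (abs_nonneg a))
  contDiffOn := contDiffOn_const.mul h.contDiffOn
  abs_fderiv_le p hp k := by
    rw [fderiv_const_mul (h.differentiableAt hD hp)]
    exact (abs_mul a _).trans_le
      (mul_le_mul_of_nonneg_left (h.abs_fderiv_le p hp k) (abs_nonneg a))

lemma mul (hU : BoundedC1On P D K₀ K U) (hV : BoundedC1On P D K₀' K' V) (hD : IsOpen D)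
    (hDP : D ⊆ P) : BoundedC1On P D (K₀ * K₀') (K₀ * K' + K₀' * K) (fun p => U p * V p) where
  continuousOn := hU.continuousOn.mul hV.continuousOn
  abs_le p hp := (abs_mul _ _).trans_le (mul_le_mul (hU.abs_le p hp) (hV.abs_le p hp)
    (abs_nonneg _) ((abs_nonneg _).trans (hU.abs_le p hp)))
  contDiffOn := hU.contDiffOn.mul hV.contDiffOn
  abs_fderiv_le p hp k := by
    have product_le {a b s t : ℝ} (ha : |a| ≤ s) (hb : |b| ≤ t) : |a * b| ≤ s * t :=
      (abs_mul a b).trans_le (mul_le_mul ha hb (abs_nonneg b) ((abs_nonneg a).trans ha))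
    rw [fderiv_fun_mul (hU.differentiableAt hD hp) (hV.differentiableAt hD hp)]
    exact (abs_add_le _ _).trans (add_le_add
      (product_le (hU.abs_le p (hDP hp)) (hV.abs_fderiv_le p hp k))
      (product_le (hV.abs_le p (hDP hp)) (hU.abs_fderiv_le p hp k)))

lemma norm_fderiv_le (h : BoundedC1On P D K₀ K U) {p : ℝ × ℝ × ℝ} (hp : p ∈ D) :
    ‖fderiv ℝ U p‖ ≤ 3 * K :=
  norm_le_of_abs_apply_coordDir_le (h.abs_fderiv_le p hp)

lemma of_norm1E_le (hD : IsOpen D) (hPA : P ⊆ A) (hDB : D ⊆ B) (hu : RegularOn A B u)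
    (hK : norm1E A B u ≤ K) : BoundedC1On P D K K (uncurry3 u) := by
  obtain ⟨hcont, hbdd, hpart, ht, hx, hy, C, hC⟩ := hu
  simp only [norm1E, max_le_iff] at hK
  have hcd : ContDiffOn ℝ 1 (uncurry3 u) D := (contDiffOn_uncurry3_iff hD).2
    ⟨fun p hp => hpart p (hDB hp), ht.mono hDB, hx.mono hDB, hy.mono hDB⟩
  refine ⟨hcont.mono hPA, fun p hp => (abs_le_supNorm3 hbdd (hPA hp)).trans hK.1, hcd,
    fun p hp => ?_⟩
  obtain ⟨eq_t, eq_x, eq_y⟩ := partials_eq_fderiv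
    ((hcd.contDiffAt (hD.mem_nhds hp)).differentiableAt one_ne_zero)
  rw [Fin.forall_fin_succ, Fin.forall_fin_two]
  refine ⟨?_, ?_, ?_⟩
  · exact eq_t ▸ (abs_le_supNorm3 ⟨C, fun q hq => (hC q hq).1⟩ (hDB hp)).trans hK.2.1
  · exact eq_x ▸ (abs_le_supNorm3 ⟨C, fun q hq => (hC q hq).2.1⟩ (hDB hp)).trans hK.2.2.1
  · exact eq_y ▸ (abs_le_supNorm3 ⟨C, fun q hq => (hC q hq).2.2⟩ (hDB hp)).trans hK.2.2.2

lemma abs_partials_le (h : BoundedC1On P D K₀ K (uncurry3 u)) (hD : IsOpen D)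
    {p : ℝ × ℝ × ℝ} (hp : p ∈ D) : |uncurry3 (pdtF u) p| ≤ K ∧
      |uncurry3 (pdxF u) p| ≤ K ∧ |uncurry3 (pdyF u) p| ≤ K := by
  obtain ⟨eq_t, eq_x, eq_y⟩ := partials_eq_fderiv (h.differentiableAt hD hp)
  exact ⟨eq_t ▸ h.abs_fderiv_le p hp 0, eq_x ▸ h.abs_fderiv_le p hp 1,
    eq_y ▸ h.abs_fderiv_le p hp 2⟩

lemma derivReg (h : BoundedC1On P D K₀ K (uncurry3 u)) (hD : IsOpen D) : DerivReg D u :=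
  have ⟨hpart, ht, hx, hy⟩ := (contDiffOn_uncurry3_iff hD).1 h.contDiffOn
  ⟨hpart, ht, hx, hy, K, fun _ hp => h.abs_partials_le hD hp⟩

lemma norm1E_le (h : BoundedC1On P D K K (uncurry3 u)) (hD : IsOpen D) (hK : 0 ≤ K) :
    norm1E P D u ≤ K :=
  max_le (supNorm3_le hK h.abs_le) (max_le
    (supNorm3_le hK fun _ hp => (h.abs_partials_le hD hp).1) (max_le
    (supNorm3_le hK fun _ hp => (h.abs_partials_le hD hp).2.1)
    (supNorm3_le hK fun _ hp => (h.abs_partials_le hD hp).2.2)))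

end BoundedC1On

lemma boundedC1On_QQ (hD : IsOpen D) (hDP : D ⊆ P) {M : Fin 4 → ℝ → ℝ → ℝ → ℝ} {R : ℝ}
    (hM : ∀ i, BoundedC1On P D R R (uncurry3 (M i))) (c S : ℝ) :
    BoundedC1On P D (4 * |c * S| * R ^ 2) (8 * |c * S| * R ^ 2) (uncurry3 (QQ c S M)) := by
  have gain := (hM 1).mul (hM 2) hD hDP
  have loss := ((hM 0).mul (hM 3) hD hDP).const_mul hD (-1)
  have := ((gain.add loss hD).const_mul hD (2 * c * S)).congr hD hDP
    (V := uncurry3 (QQ c S M)) (fun p _ => by simp only [uncurry3, QQ]; ring)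
  have habs : |2 * c * S| = 2 * |c * S| := by rw [mul_assoc, abs_mul, abs_two]
  refine this.mono (le_of_eq ?_) (le_of_eq ?_) <;> rw [habs, abs_neg, abs_one] <;> ring

end BoundedC1On

namespace BoundedC1On

lemma ite_le {P D : Set (ℝ × ℝ × ℝ)} {K₀ K : ℝ} {U V f g : ℝ × ℝ × ℝ → ℝ} (hf : Continuous f)
    (hg : Continuous g)
    (hU : BoundedC1On (P ∩ {p | f p ≤ g p}) (D ∩ {p | f p < g p}) K₀ K U)
    (hV : BoundedC1On (P ∩ {p | g p ≤ f p}) (D ∩ {p | g p < f p}) K₀ K V)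
    (hUV : ∀ p ∈ P, f p = g p → U p = V p) (hD : IsOpen D) (hfg : ∀ p ∈ D, f p ≠ g p) :
    BoundedC1On P D K₀ K (fun p => if f p ≤ g p then U p else V p) := by
  have local_branch : ∀ p ∈ D,
      (p ∈ D ∩ {p | f p < g p} ∧ (fun p => if f p ≤ g p then U p else V p) =ᶠ[𝓝 p] U) ∨
      (p ∈ D ∩ {p | g p < f p} ∧ (fun p => if f p ≤ g p then U p else V p) =ᶠ[𝓝 p] V) := by
    intro p hp
    refine (lt_or_gt_of_ne (hfg p hp)).imp (fun h => ⟨⟨hp, h⟩, ?_⟩) (fun h => ⟨⟨hp, h⟩, ?_⟩)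
    · filter_upwards [(isOpen_lt hf hg).mem_nhds h] with q hq using if_pos (le_of_lt hq)
    · filter_upwards [(isOpen_lt hg hf).mem_nhds h] with q hq using if_neg (not_le_of_gt hq)
  refine ⟨?_, fun p hp => ?_, fun p hp => ?_, fun p hp k => ?_⟩
  · refine ContinuousOn.if (fun p hp => hUV p hp.1 (frontier_le_subset_eq hf hg hp.2))
      (hU.continuousOn.mono ?_) (hV.continuousOn.mono ?_)
    · rw [(isClosed_le hf hg).closure_eq]
    · exact inter_subset_inter_right P
        (closure_minimal (fun p hp => (not_le.1 hp).le) (isClosed_le hg hf))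
  · split_ifs with h
    · exact hU.abs_le p ⟨hp, h⟩
    · exact hV.abs_le p ⟨hp, (not_le.1 h).le⟩
  · rcases local_branch p hp with ⟨h, heq⟩ | ⟨h, heq⟩
    · exact ((hU.contDiffAt (hD.inter (isOpen_lt hf hg)) h).congr_of_eventuallyEq
        heq).contDiffWithinAt
    · exact ((hV.contDiffAt (hD.inter (isOpen_lt hg hf)) h).congr_of_eventuallyEq
        heq).contDiffWithinAt
  · rcases local_branch p hp with ⟨h, heq⟩ | ⟨h, heq⟩ <;> rw [heq.fderiv_eq]
    · exact hU.abs_fderiv_le p h k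
    · exact hV.abs_fderiv_le p h k

lemma of_hasFDerivAt_const {P D : Set (ℝ × ℝ × ℝ)} {K₀ K : ℝ} {U : ℝ × ℝ × ℝ → ℝ}
    {L : ℝ × ℝ × ℝ →L[ℝ] ℝ} (hL : ∀ p, HasFDerivAt U L p) (hU : ∀ p ∈ P, |U p| ≤ K₀)
    (hK : ∀ k, |L (coordDir k)| ≤ K) : BoundedC1On P D K₀ K U := by
  have hfderiv : fderiv ℝ U = fun _ => L := funext fun p => (hL p).fderiv
  have hdiff : Differentiable ℝ U := fun p => (hL p).differentiableAt
  refine ⟨hdiff.continuous.continuousOn, hU,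
    (contDiff_one_iff_fderiv.2 ⟨hdiff, ?_⟩).contDiffOn, fun p _ k => ?_⟩ <;> rw [hfderiv]
  · exact continuous_const
  · exact hK k

end BoundedC1On

section Characteristics

/-- The direction in `ℝ × ℝ × ℝ` of the characteristics of the `i`-th equation. -/
def charDir (c : ℝ) (i : Fin 4) : ℝ × ℝ × ℝ := (1, spX c i, spY c i)

/-- The inner normal to the face of the rectangle through which the `i`-th species enters. -/
def inflowNormal : Fin 4 → (ℝ × ℝ × ℝ →L[ℝ] ℝ) :=
  ![.fst ℝ ℝ ℝ ∘L .snd ℝ ℝ (ℝ × ℝ), .snd ℝ ℝ ℝ ∘L .snd ℝ ℝ (ℝ × ℝ),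
    -(.snd ℝ ℝ ℝ ∘L .snd ℝ ℝ (ℝ × ℝ)), -(.fst ℝ ℝ ℝ ∘L .snd ℝ ℝ (ℝ × ℝ))]

/-- The value of `inflowNormal i` on the `i`-th inflow face. -/
def inflowOffset (a₁ b₁ a₂ b₂ : ℝ) : Fin 4 → ℝ := ![a₁, a₂, -b₂, -b₁]

/-- The signed distance to the `i`-th inflow face; the rectangle is where all four are
nonnegative. -/
def inflowDist (a₁ b₁ a₂ b₂ : ℝ) (i : Fin 4) (p : ℝ × ℝ × ℝ) : ℝ :=
  inflowNormal i p - inflowOffset a₁ b₁ a₂ b₂ i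

/-- The time for which the `i`-th characteristic can be followed backwards from `p` before it meets
either the initial time `τ` or the inflow face. -/
def travelTime (c τ a₁ b₁ a₂ b₂ : ℝ) (i : Fin 4) (p : ℝ × ℝ × ℝ) : ℝ :=
  min (p.1 - τ) (inflowDist a₁ b₁ a₂ b₂ i p / c)

lemma inflowNormal_charDir_self (c : ℝ) (i : Fin 4) : inflowNormal i (charDir c i) = c := by
  fin_cases i <;> simp [inflowNormal, charDir, spX, spY]

lemma inflowNormal_charDir_nonpos {c : ℝ} (hc : 0 ≤ c) {i j : Fin 4} (hij : j ≠ i) :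
    inflowNormal j (charDir c i) ≤ 0 := by
  fin_cases i <;> fin_cases j <;> simp [inflowNormal, charDir, spX, spY, hc] at hij ⊢

lemma abs_inflowNormal_coordDir_le (i : Fin 4) (k : Fin 3) :
    |inflowNormal i (coordDir k)| ≤ 1 := by
  fin_cases i <;> fin_cases k <;> simp [inflowNormal, coordDir]

variable {c τ τ' a₁ b₁ a₂ b₂ : ℝ}

local notation "𝒫" => PsetT (Icc τ τ') a₁ b₁ a₂ b₂
local notation "𝒟" => Dset c τ τ' a₁ b₁ a₂ b₂

lemma inflowDist_sub_smul (i : Fin 4) (p w : ℝ × ℝ × ℝ) (r : ℝ) :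
    inflowDist a₁ b₁ a₂ b₂ i (p - r • w) = inflowDist a₁ b₁ a₂ b₂ i p - r * inflowNormal i w := by
  simp only [inflowDist, map_sub, map_smul, smul_eq_mul]
  ring

lemma inflowDist_apply (i : Fin 4) (p : ℝ × ℝ × ℝ) : inflowDist a₁ b₁ a₂ b₂ i p =
    ![p.2.1 - a₁, p.2.2 - a₂, b₂ - p.2.2, b₁ - p.2.1] i := by
  fin_cases i <;> simp [inflowDist, inflowNormal, inflowOffset, neg_add_eq_sub]

lemma forall_inflowDist_iff {Q : ℝ → Prop} {p : ℝ × ℝ × ℝ} :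
    (∀ i, Q (inflowDist a₁ b₁ a₂ b₂ i p)) ↔
      Q (p.2.1 - a₁) ∧ Q (p.2.2 - a₂) ∧ Q (b₂ - p.2.2) ∧ Q (b₁ - p.2.1) := by
  simp [inflowDist_apply, Fin.forall_fin_succ]

lemma mem_PsetT_iff {p : ℝ × ℝ × ℝ} :
    p ∈ 𝒫 ↔ p.1 ∈ Icc τ τ' ∧ ∀ i, 0 ≤ inflowDist a₁ b₁ a₂ b₂ i p := by
  simp only [forall_inflowDist_iff, PsetT, mem_prod, mem_Icc, sub_nonneg]
  tauto

lemma mem_openBox_iff {p : ℝ × ℝ × ℝ} : p ∈ Ioo τ τ' ×ˢ Ioo a₁ b₁ ×ˢ Ioo a₂ b₂ ↔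
    p.1 ∈ Ioo τ τ' ∧ ∀ i, 0 < inflowDist a₁ b₁ a₂ b₂ i p := by
  simp only [forall_inflowDist_iff, mem_prod, mem_Ioo, sub_pos]
  tauto

lemma mem_offPlanes_iff {p : ℝ × ℝ × ℝ} : p ∈ offPlanes c τ a₁ b₁ a₂ b₂ ↔
    ∀ i, inflowDist a₁ b₁ a₂ b₂ i p ≠ c * (p.1 - τ) := by
  rw [forall_inflowDist_iff (Q := (· ≠ c * (p.1 - τ)))]
  refine and_congr (not_congr ?_) (and_congr (not_congr ?_) (and_congr (not_congr ?_)
    (not_congr ?_))) <;> constructor <;> intro h <;> linarith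

lemma mem_Dset_iff {p : ℝ × ℝ × ℝ} :
    p ∈ 𝒟 ↔ p.1 ∈ Ioo τ τ' ∧ (∀ i, 0 < inflowDist a₁ b₁ a₂ b₂ i p) ∧
      ∀ i, inflowDist a₁ b₁ a₂ b₂ i p ≠ c * (p.1 - τ) := by
  rw [Dset, mem_inter_iff, mem_openBox_iff, mem_offPlanes_iff, and_assoc]

lemma Dset_subset_PsetT : 𝒟 ⊆ 𝒫 := fun _ hp =>
  have ⟨ht, hd, _⟩ := mem_Dset_iff.1 hp
  mem_PsetT_iff.2 ⟨Ioo_subset_Icc_self ht, fun i => (hd i).le⟩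

/-- The linear form of which the `i`-th exceptional plane is a level set. -/
def exceptionalForm (c : ℝ) (i : Fin 4) : ℝ × ℝ × ℝ →L[ℝ] ℝ :=
  inflowNormal i - c • .fst ℝ ℝ (ℝ × ℝ)

lemma exceptionalForm_ne_zero (c : ℝ) (i : Fin 4) : exceptionalForm c i ≠ 0 := by
  intro h
  have := DFunLike.congr_fun h (0, 1, 1)
  fin_cases i <;> simp [exceptionalForm, inflowNormal] at this

lemma inflowDist_eq_iff {i : Fin 4} {p : ℝ × ℝ × ℝ} :
    inflowDist a₁ b₁ a₂ b₂ i p = c * (p.1 - τ) ↔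
      exceptionalForm c i p = inflowOffset a₁ b₁ a₂ b₂ i - c * τ := by
  have : exceptionalForm c i p = inflowNormal i p - c * p.1 := rfl
  rw [this, inflowDist]
  constructor <;> intro h <;> linarith

lemma Dset_eq_diff_hyperplanes : 𝒟 = Ioo τ τ' ×ˢ Ioo a₁ b₁ ×ˢ Ioo a₂ b₂ ∩
    {p | ∀ i, exceptionalForm c i p ≠ inflowOffset a₁ b₁ a₂ b₂ i - c * τ} := by
  ext p
  simp only [Dset, mem_inter_iff, mem_offPlanes_iff, mem_ofPred_eq, ne_eq, inflowDist_eq_iff]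

lemma isOpen_openBox : IsOpen (Ioo τ τ' ×ˢ Ioo a₁ b₁ ×ˢ Ioo a₂ b₂) :=
  isOpen_Ioo.prod (isOpen_Ioo.prod isOpen_Ioo)

lemma isOpen_Dset : IsOpen 𝒟 := by
  rw [Dset_eq_diff_hyperplanes, ofPred_forall]
  exact isOpen_openBox.inter (isOpen_iInter_of_finite fun i =>
    isOpen_compl_singleton.preimage (exceptionalForm c i).continuous)

lemma BoundedC1On.lipschitzOnWith {K₀ K : ℝ} {U : ℝ × ℝ × ℝ → ℝ} (h : BoundedC1On 𝒫 𝒟 K₀ K U)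
    (hτ : τ < τ') (ha : a₁ < b₁) (hb : a₂ < b₂) : LipschitzOnWith (3 * K).toNNReal U 𝒫 := by
  have closure_box : closure (Ioo τ τ' ×ˢ Ioo a₁ b₁ ×ˢ Ioo a₂ b₂) = 𝒫 := by
    rw [closure_prod_eq, closure_prod_eq, closure_Ioo hτ.ne, closure_Ioo ha.ne, closure_Ioo hb.ne,
      PsetT]
  rw [← closure_box]
  refine lipschitzOnWith_closure_of_fderiv_le_off_hyperplanes (exceptionalForm_ne_zero c)
    isOpen_openBox ((convex_Ioo _ _).prod ((convex_Ioo _ _).prod (convex_Ioo _ _)))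
    (k := fun i => inflowOffset a₁ b₁ a₂ b₂ i - c * τ)
    (closure_box ▸ h.continuousOn) (fun p hp => ?_) fun p hp => ?_ <;>
    rw [← Dset_eq_diff_hyperplanes] at hp
  · exact h.differentiableAt isOpen_Dset hp
  · exact (h.norm_fderiv_le hp).trans (Real.le_coe_toNNReal _)

lemma continuous_inflowDist (i : Fin 4) : Continuous (inflowDist a₁ b₁ a₂ b₂ i) :=
  (inflowNormal i).continuous.sub continuous_const

lemma continuous_travelTime (i : Fin 4) : Continuous (travelTime c τ a₁ b₁ a₂ b₂ i) :=
  (continuous_fst.sub continuous_const).min ((continuous_inflowDist i).div_const c)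

variable {i : Fin 4} {p : ℝ × ℝ × ℝ}

lemma travelTime_nonneg (hc : 0 ≤ c) (hp : p ∈ 𝒫) : 0 ≤ travelTime c τ a₁ b₁ a₂ b₂ i p :=
  have ⟨ht, hd⟩ := mem_PsetT_iff.1 hp
  le_min (sub_nonneg.2 ht.1) (div_nonneg (hd i) hc)

lemma travelTime_le (hp : p ∈ 𝒫) : travelTime c τ a₁ b₁ a₂ b₂ i p ≤ τ' - τ :=
  (min_le_left _ _).trans (sub_le_sub_right (mem_PsetT_iff.1 hp).1.2 τ)

lemma sub_smul_charDir_mem_PsetT (hc : 0 < c) (hp : p ∈ 𝒫) {r : ℝ} (hr : 0 ≤ r)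
    (hrℓ : r ≤ travelTime c τ a₁ b₁ a₂ b₂ i p) : p - r • charDir c i ∈ 𝒫 := by
  obtain ⟨ht, hd⟩ := mem_PsetT_iff.1 hp
  obtain ⟨hrt, hrd⟩ := le_min_iff.1 hrℓ
  refine mem_PsetT_iff.2 ⟨?_, fun j => ?_⟩
  · simp only [charDir, Prod.smul_mk, Prod.fst_sub, smul_eq_mul, mul_one]
    constructor <;> linarith [ht.2]
  rw [inflowDist_sub_smul]
  obtain rfl | hij := eq_or_ne j i
  · rw [inflowNormal_charDir_self]
    exact sub_nonneg.2 ((le_div_iff₀ hc).1 hrd)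
  · linarith [hd j, mul_nonpos_of_nonneg_of_nonpos hr (inflowNormal_charDir_nonpos hc.le hij)]

lemma ae_sub_smul_charDir_mem_Dset (hc : 0 < c) (hp : p ∈ 𝒟) :
    ∀ᵐ r, r ∈ Ioc 0 (travelTime c τ a₁ b₁ a₂ b₂ i p) → p - r • charDir c i ∈ 𝒟 := by
  obtain ⟨ht, hd, hoff⟩ := mem_Dset_iff.1 hp
  have crossings_finite := finite_setOf_exists_apply_add_smul_eq (L := exceptionalForm c)
    (k := fun i => inflowOffset a₁ b₁ a₂ b₂ i - c * τ)
    (fun j => mt inflowDist_eq_iff.2 (hoff j)) (-charDir c i)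
  filter_upwards [crossings_finite.countable.ae_notMem volume,
    (countable_singleton (travelTime c τ a₁ b₁ a₂ b₂ i p)).ae_notMem volume] with r hcross hend hr
  obtain ⟨hrt, hrd⟩ := lt_min_iff.1 (lt_of_le_of_ne hr.2 hend)
  refine mem_Dset_iff.2 ⟨?_, fun j => ?_, fun j hj => hcross ⟨j, ?_⟩⟩
  · simp only [charDir, Prod.smul_mk, Prod.fst_sub, smul_eq_mul, mul_one]
    constructor <;> linarith [ht.2, hr.1]
  · rw [inflowDist_sub_smul]
    obtain rfl | hij := eq_or_ne j i
    · rw [inflowNormal_charDir_self]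
      exact sub_pos.2 ((lt_div_iff₀ hc).1 hrd)
    · linarith [hd j,
        mul_nonpos_of_nonneg_of_nonpos hr.1.le (inflowNormal_charDir_nonpos hc.le hij)]
  · rw [smul_neg, ← sub_eq_add_neg]
    exact inflowDist_eq_iff.1 hj

lemma sub_ne_inflowDist_div (hc : 0 < c) (hp : p ∈ 𝒟) :
    p.1 - τ ≠ inflowDist a₁ b₁ a₂ b₂ i p / c := fun h =>
  (mem_Dset_iff.1 hp).2.2 i (((eq_div_iff hc.ne').1 h).symm.trans (mul_comm _ _))

lemma boundedC1On_travelTime (hc : 0 < c) (i : Fin 4) :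
    BoundedC1On 𝒫 𝒟 (τ' - τ) (1 + 1 / c) (travelTime c τ a₁ b₁ a₂ b₂ i) := by
  have eq_ite : travelTime c τ a₁ b₁ a₂ b₂ i = fun p =>
      if p.1 - τ ≤ inflowDist a₁ b₁ a₂ b₂ i p / c then p.1 - τ
      else inflowDist a₁ b₁ a₂ b₂ i p / c := funext fun p => min_def _ _
  have hc' : 0 ≤ 1 / c := by positivity
  rw [eq_ite]
  refine .ite_le (by fun_prop) ((continuous_inflowDist i).div_const c)
    (.of_hasFDerivAt_const (fun p => hasFDerivAt_fst.sub_const τ) (fun p hp => ?_) fun k => ?_)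
    (.of_hasFDerivAt_const (L := c⁻¹ • inflowNormal i) (fun p => ?_) (fun p hp => ?_) fun k => ?_)
    (fun _ _ h => h) isOpen_Dset fun p hp => sub_ne_inflowDist_div hc hp
  · obtain ⟨ht, -⟩ := mem_PsetT_iff.1 hp.1
    rw [abs_of_nonneg (sub_nonneg.2 ht.1)]
    exact sub_le_sub_right ht.2 τ
  · have : |(coordDir k).1| ≤ 1 := by fin_cases k <;> simp [coordDir]
    exact this.trans (le_add_of_nonneg_right hc')
  · simpa only [div_eq_inv_mul, inflowDist] using!
      ((inflowNormal i).hasFDerivAt.sub_const (inflowOffset a₁ b₁ a₂ b₂ i)).const_mul c⁻¹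
  · obtain ⟨ht, hd⟩ := mem_PsetT_iff.1 hp.1
    rw [abs_of_nonneg (div_nonneg (hd i) hc.le)]
    exact hp.2.trans (sub_le_sub_right ht.2 τ)
  · have : |c⁻¹ * inflowNormal i (coordDir k)| ≤ 1 / c := by
      rw [abs_mul, abs_of_pos (inv_pos.2 hc), one_div]
      exact mul_le_of_le_one_right (inv_nonneg.2 hc.le) (abs_inflowNormal_coordDir_le i k)
    exact this.trans (le_add_of_nonneg_left zero_le_one)

lemma boundedC1On_transportIntegral_of_lipschitzWith {K₀ K : ℝ} {C : ℝ≥0} {g : ℝ × ℝ × ℝ → ℝ}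
    (hg : LipschitzWith C g) (hgC1 : BoundedC1On 𝒫 𝒟 K₀ K g) (hc : 0 < c) (i : Fin 4) :
    BoundedC1On 𝒫 𝒟 (K₀ * (τ' - τ)) (K * (τ' - τ) + (1 + 1 / c) * K₀)
      (transportIntegral g (charDir c i) (travelTime c τ a₁ b₁ a₂ b₂ i)) := by
  have hℓ := boundedC1On_travelTime (τ := τ) (τ' := τ') (a₁ := a₁) (b₁ := b₁) (a₂ := a₂)
    (b₂ := b₂) hc i
  have ray_regular : ∀ p ∈ 𝒟, ∀ᵐ r, r ∈ uIoc 0 (travelTime c τ a₁ b₁ a₂ b₂ i p) →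
      ContDiffAt ℝ 1 g (p - r • charDir c i) := fun p hp => by
    rw [uIoc_of_le (travelTime_nonneg hc.le (Dset_subset_PsetT hp))]
    exact (ae_sub_smul_charDir_mem_Dset hc hp).mono fun r hr h =>
      hgC1.contDiffAt isOpen_Dset (hr h)
  refine ⟨(continuous_transportIntegral hg.continuous (continuous_travelTime i)).continuousOn,
    fun p hp => ?_, contDiffOn_transportIntegral isOpen_Dset hg hℓ.contDiffOn ray_regular,
    fun p hp k => ?_⟩
  · have hℓp := travelTime_nonneg (i := i) hc.le hp
    exact (norm_transportIntegral_le (g := g) hℓp (.of_forall fun r hr =>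
      hgC1.abs_le _ (sub_smul_charDir_mem_PsetT hc hp hr.1.le hr.2))).trans
      (mul_le_mul_of_nonneg_left (travelTime_le hp) ((abs_nonneg _).trans (hgC1.abs_le p hp)))
  · have hpP := Dset_subset_PsetT hp
    have hℓp := travelTime_nonneg (i := i) hc.le hpP
    rw [(hasFDerivAt_transportIntegral hg (hℓ.differentiableAt isOpen_Dset hp).hasFDerivAt
      ((ray_regular p hp).mono fun r hr h => (hr h).differentiableAt one_ne_zero)).fderiv]
    refine (abs_add_le _ _).trans (add_le_add ?_ ?_)
    · exact (norm_transportIntegral_fderiv_apply_le hg hℓp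
        ((ae_sub_smul_charDir_mem_Dset hc hp).mono fun r hr h =>
          hgC1.abs_fderiv_le _ (hr h) k)).trans
        (mul_le_mul_of_nonneg_left (travelTime_le hpP)
          ((abs_nonneg _).trans (hgC1.abs_fderiv_le p hp k)))
    · exact (abs_mul _ _).trans_le (mul_le_mul (hℓ.abs_fderiv_le p hp k)
        (hgC1.abs_le _ (sub_smul_charDir_mem_PsetT hc hpP hℓp le_rfl)) (abs_nonneg _)
        ((abs_nonneg _).trans (hℓ.abs_fderiv_le p hp k)))

lemma boundedC1On_transportIntegral {K₀ K : ℝ} {U : ℝ × ℝ × ℝ → ℝ}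
    (hU : BoundedC1On 𝒫 𝒟 K₀ K U) (hc : 0 < c) (hτ : τ < τ') (ha : a₁ < b₁) (hb : a₂ < b₂)
    (i : Fin 4) :
    BoundedC1On 𝒫 𝒟 (K₀ * (τ' - τ)) (K * (τ' - τ) + (1 + 1 / c) * K₀)
      (transportIntegral U (charDir c i) (travelTime c τ a₁ b₁ a₂ b₂ i)) := by
  obtain ⟨g, hg, hUg⟩ := (hU.lipschitzOnWith hτ ha hb).extend_real
  refine (boundedC1On_transportIntegral_of_lipschitzWith hg
    (hU.congr isOpen_Dset Dset_subset_PsetT hUg.symm) hc i).congr isOpen_Dset Dset_subset_PsetT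
    fun p hp => intervalIntegral.integral_congr fun r hr => hUg ?_
  rw [uIcc_of_le (travelTime_nonneg hc.le hp)] at hr
  exact sub_smul_charDir_mem_PsetT hc hp hr.1 hr.2

end Characteristics

section AffineComposition

lemma norm_coordDir_le (k : Fin 3) : ‖coordDir k‖ ≤ 1 := by
  fin_cases k <;> simp [coordDir, Prod.norm_def]

variable {f : ℝ → ℝ → ℝ} {α β : ℝ × ℝ × ℝ →L[ℝ] ℝ} {a b : ℝ}

/-- If `α e * β e = 0`, then along `e` only one of the two arguments of `f` moves, so separate
differentiability of `f` suffices. -/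
lemma hasLineDerivAt_comp_affine {p e : ℝ × ℝ × ℝ} (he : α e * β e = 0)
    (h₁ : DifferentiableAt ℝ (fun v => f v (β p + b)) (α p + a))
    (h₂ : DifferentiableAt ℝ (fun v => f (α p + a) v) (β p + b)) :
    HasLineDerivAt ℝ (fun p => f (α p + a) (β p + b))
      (α e * deriv (fun v => f v (β p + b)) (α p + a) +
        β e * deriv (fun v => f (α p + a) v) (β p + b)) p e := by
  have moving (L : ℝ × ℝ × ℝ →L[ℝ] ℝ) (k : ℝ) :
      HasDerivAt (fun s : ℝ => L (p + s • e) + k) (L e) 0 := by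
    simpa using (((hasDerivAt_id (0 : ℝ)).mul_const (L e)).const_add (L p)).add_const k
  rw [HasLineDerivAt]
  rcases mul_eq_zero.1 he with h | h
  · have := h₂.hasDerivAt.comp_of_eq 0 (moving β b) (by simp)
    simpa [h, mul_comm, Function.comp_def] using this
  · have := h₁.hasDerivAt.comp_of_eq 0 (moving α a) (by simp)
    simpa [h, mul_comm, Function.comp_def] using this

lemma Smooth2.regularOn_comp_affine {Ω : Set (ℝ × ℝ)} (hf : Smooth2 Ω f)
    (hαβ : ∀ k, α (coordDir k) * β (coordDir k) = 0) {u : ℝ → ℝ → ℝ → ℝ}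
    (hu : uncurry3 u = fun p => f (α p + a) (β p + b)) {B : Set (ℝ × ℝ × ℝ)}
    (hB : MapsTo (fun p => (α p + a, β p + b)) B Ω) :
    RegularOn B B u := by
  obtain ⟨hcont, hdiff, hcont₁, hcont₂, C, hC⟩ := hf
  have hmap : ContinuousOn (fun p => (α p + a, β p + b)) B := by fun_prop
  let d (k : Fin 3) (p : ℝ × ℝ × ℝ) : ℝ :=
    α (coordDir k) * deriv (fun v => f v (β p + b)) (α p + a) +
      β (coordDir k) * deriv (fun v => f (α p + a) v) (β p + b)
  have line_deriv : ∀ p ∈ B, ∀ k, HasLineDerivAt ℝ (uncurry3 u) (d k p) p (coordDir k) :=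
    fun p hp k => hu ▸ hasLineDerivAt_comp_affine (hαβ k) (hdiff _ (hB hp)).1 (hdiff _ (hB hp)).2
  have d_cont (k : Fin 3) : ContinuousOn (d k) B :=
    (continuousOn_const.mul (hcont₁.comp hmap hB)).add
      (continuousOn_const.mul (hcont₂.comp hmap hB))
  obtain ⟨K, hK⟩ : ∃ K, ∀ p ∈ B, ∀ k, |d k p| ≤ K := by
    refine ⟨(‖α‖ + ‖β‖) * C, fun p hp k => ?_⟩
    obtain ⟨-, h₁, h₂⟩ := hC _ (hB hp)
    have coefficient_le (L : ℝ × ℝ × ℝ →L[ℝ] ℝ) : |L (coordDir k)| ≤ ‖L‖ :=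
      L.le_of_opNorm_le_of_le le_rfl (norm_coordDir_le k) |>.trans_eq (mul_one _)
    rw [add_mul]
    refine (abs_add_le _ _).trans (add_le_add ?_ ?_) <;> rw [abs_mul]
    · exact mul_le_mul (coefficient_le α) h₁ (abs_nonneg _) (norm_nonneg _)
    · exact mul_le_mul (coefficient_le β) h₂ (abs_nonneg _) (norm_nonneg _)
  have partials_eq := fun p hp => partials_eq_of_hasLineDerivAt (line_deriv p hp)
  refine ⟨(hcont.comp hmap hB).congr fun p _ => congrFun hu p,
    ⟨C, fun p hp => (congrArg abs (congrFun hu p)).trans_le (hC _ (hB hp)).1⟩,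
    fun p hp => .of_hasLineDerivAt (line_deriv p hp),
    (d_cont 0).congr fun p hp => (partials_eq p hp).1,
    (d_cont 1).congr fun p hp => (partials_eq p hp).2.1,
    (d_cont 2).congr fun p hp => (partials_eq p hp).2.2, K, fun p hp => ?_⟩
  obtain ⟨eq_t, eq_x, eq_y⟩ := partials_eq p hp
  exact ⟨(congrArg abs eq_t).trans_le (hK p hp 0), (congrArg abs eq_x).trans_le (hK p hp 1),
    (congrArg abs eq_y).trans_le (hK p hp 2)⟩

end AffineComposition

section TransportedData

/-- The coordinate along the `i`-th inflow face. -/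
def inflowTangent : Fin 4 → (ℝ × ℝ × ℝ →L[ℝ] ℝ) :=
  ![.snd ℝ ℝ ℝ ∘L .snd ℝ ℝ (ℝ × ℝ), .fst ℝ ℝ ℝ ∘L .snd ℝ ℝ (ℝ × ℝ),
    .fst ℝ ℝ ℝ ∘L .snd ℝ ℝ (ℝ × ℝ), .snd ℝ ℝ ℝ ∘L .snd ℝ ℝ (ℝ × ℝ)]

/-- The interval over which `inflowTangent i` ranges on the `i`-th inflow face. -/
def inflowEdge (a₁ b₁ a₂ b₂ : ℝ) : Fin 4 → Set ℝ :=
  ![Icc a₂ b₂, Icc a₁ b₁, Icc a₁ b₁, Icc a₂ b₂]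

/-- `NiceData` without the sign conditions, with the four boundary data indexed by `Fin 4` as
functions of the time and of the coordinate along the inflow face. -/
structure RegularData (T : Set ℝ) (t0 a₁ b₁ a₂ b₂ : ℝ) (N0 B : Fin 4 → ℝ → ℝ → ℝ) : Prop where
  smooth_initial : ∀ i, Smooth2 (Rect2 a₁ b₁ a₂ b₂) (N0 i)
  smooth_boundary : ∀ i, Smooth2 (T ×ˢ inflowEdge a₁ b₁ a₂ b₂ i) (B i)
  compatible : ∀ i, ∀ v ∈ Rect2 a₁ b₁ a₂ b₂, inflowDist a₁ b₁ a₂ b₂ i (t0, v) = 0 →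
    N0 i v.1 v.2 = B i t0 (inflowTangent i (t0, v))

lemma NiceData.regularData {T : Set ℝ} {t0 a₁ b₁ a₂ b₂ : ℝ} {N0 : Fin 4 → ℝ → ℝ → ℝ}
    {B1 B2 B3 B4 : ℝ → ℝ → ℝ} (h : NiceData T t0 a₁ b₁ a₂ b₂ N0 B1 B2 B3 B4) :
    RegularData T t0 a₁ b₁ a₂ b₂ N0 ![B1, B2, B3, B4] := by
  obtain ⟨hN0, hB1, hB2, hB3, hB4, compat₁, compat₂, compat₃, compat₄⟩ := h
  refine ⟨fun i => (hN0 i).1, fun i => ?_, fun i v hv hd => ?_⟩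
  · fin_cases i
    exacts [hB1.1, hB2.1, hB3.1, hB4.1]
  · obtain ⟨x, y⟩ := v
    rw [inflowDist_apply] at hd
    fin_cases i
    · obtain rfl : x = a₁ := sub_eq_zero.1 hd
      exact compat₁ y hv.2
    · obtain rfl : y = a₂ := sub_eq_zero.1 hd
      exact compat₂ x hv.1
    · obtain rfl : b₂ = y := sub_eq_zero.1 hd
      exact compat₃ x hv.1
    · obtain rfl : b₁ = x := sub_eq_zero.1 hd
      exact compat₄ y hv.2

/-- The datum carried by the `i`-th characteristic through `p`: the initial one if the
characteristic starts inside the rectangle, the boundary one otherwise. -/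
def transportedDatum (c τ a₁ b₁ a₂ b₂ : ℝ) (N0 : Fin 4 → ℝ → ℝ → ℝ) (B1 B2 B3 B4 : ℝ → ℝ → ℝ)
    (i : Fin 4) (p : ℝ × ℝ × ℝ) : ℝ :=
  if p.1 - τ ≤ inflowDist a₁ b₁ a₂ b₂ i p / c then uncurry3 (barN0 c τ N0 i) p
  else uncurry3 (barB c a₁ b₁ a₂ b₂ B1 B2 B3 B4 i) p

variable {c τ τ' a₁ b₁ a₂ b₂ : ℝ} {N0 : Fin 4 → ℝ → ℝ → ℝ} {B1 B2 B3 B4 : ℝ → ℝ → ℝ}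
  {T : Set ℝ} {i : Fin 4}

local notation "𝒫" => PsetT (Icc τ τ') a₁ b₁ a₂ b₂
local notation "𝒟" => Dset c τ τ' a₁ b₁ a₂ b₂

lemma uncurry3_barB_apply (i : Fin 4) (p : ℝ × ℝ × ℝ) :
    uncurry3 (barB c a₁ b₁ a₂ b₂ B1 B2 B3 B4 i) p =
      ![B1, B2, B3, B4] i (p.1 - inflowDist a₁ b₁ a₂ b₂ i p / c) (inflowTangent i p) := by
  fin_cases i <;> simp [barB, inflowDist_apply, inflowTangent, uncurry3]

lemma mem_domBarB_iff {p : ℝ × ℝ × ℝ} : p ∈ domBarB c a₁ b₁ a₂ b₂ T i ↔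
    p ∈ PsetT T a₁ b₁ a₂ b₂ ∧ p.1 - inflowDist a₁ b₁ a₂ b₂ i p / c ∈ T := by
  fin_cases i <;> simp [domBarB, inflowDist_apply]

lemma inflowTangent_mem_inflowEdge {p : ℝ × ℝ × ℝ} (hp : p ∈ PsetT T a₁ b₁ a₂ b₂) :
    inflowTangent i p ∈ inflowEdge a₁ b₁ a₂ b₂ i := by
  obtain ⟨-, hx, hy⟩ := hp
  fin_cases i
  exacts [hy, hx, hx, hy]

lemma regularOn_barN0 (h : Smooth2 (Rect2 a₁ b₁ a₂ b₂) (N0 i)) :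
    RegularOn (domBar0 c τ a₁ b₁ a₂ b₂ T i) (domBar0 c τ a₁ b₁ a₂ b₂ T i) (barN0 c τ N0 i) := by
  refine h.regularOn_comp_affine
    (α := .fst ℝ ℝ ℝ ∘L .snd ℝ ℝ (ℝ × ℝ) - spX c i • .fst ℝ ℝ (ℝ × ℝ)) (a := spX c i * τ)
    (β := .snd ℝ ℝ ℝ ∘L .snd ℝ ℝ (ℝ × ℝ) - spY c i • .fst ℝ ℝ (ℝ × ℝ)) (b := spY c i * τ)
    (fun k => ?_) (funext fun p => ?_) fun p hp => ?_
  · have speeds : spX c i = 0 ∨ spY c i = 0 := by fin_cases i <;> simp [spX, spY]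
    fin_cases k <;> simp [coordDir, speeds]
  · simp [uncurry3, barN0, mul_sub, sub_add]
  · simpa [mul_sub, sub_sub, sub_add] using! hp.2

lemma regularOn_barB (h : Smooth2 (T ×ˢ inflowEdge a₁ b₁ a₂ b₂ i) (![B1, B2, B3, B4] i)) :
    RegularOn (domBarB c a₁ b₁ a₂ b₂ T i) (domBarB c a₁ b₁ a₂ b₂ T i)
      (barB c a₁ b₁ a₂ b₂ B1 B2 B3 B4 i) := by
  have entry_time (p : ℝ × ℝ × ℝ) : p.1 - inflowDist a₁ b₁ a₂ b₂ i p / c =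
      (.fst ℝ ℝ (ℝ × ℝ) - c⁻¹ • inflowNormal i : ℝ × ℝ × ℝ →L[ℝ] ℝ) p +
        c⁻¹ * inflowOffset a₁ b₁ a₂ b₂ i := by
    simp [inflowDist, div_eq_inv_mul, mul_sub, sub_add]
  refine h.regularOn_comp_affine (α := .fst ℝ ℝ (ℝ × ℝ) - c⁻¹ • inflowNormal i)
    (a := c⁻¹ * inflowOffset a₁ b₁ a₂ b₂ i) (β := inflowTangent i) (b := 0)
    (fun k => ?_) (funext fun p => ?_) fun p hp => ?_
  · fin_cases i <;> fin_cases k <;> simp [inflowNormal, inflowTangent, coordDir]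
  · rw [uncurry3_barB_apply, entry_time, add_zero]
  · obtain ⟨hpP, hpT⟩ := mem_domBarB_iff.1 hp
    exact ⟨mem_of_eq_of_mem (entry_time p).symm hpT,
      mem_of_eq_of_mem (add_zero _) (inflowTangent_mem_inflowEdge hpP)⟩

lemma sub_smul_charDir_eq (p : ℝ × ℝ × ℝ) : p - (p.1 - τ) • charDir c i =
    (τ, p.2.1 - spX c i * (p.1 - τ), p.2.2 - spY c i * (p.1 - τ)) := by
  ext <;> simp [charDir, mul_comm]

lemma inter_le_subset_domBar0 (hc : 0 < c) :
    𝒫 ∩ {p | p.1 - τ ≤ inflowDist a₁ b₁ a₂ b₂ i p / c} ⊆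
      domBar0 c τ a₁ b₁ a₂ b₂ (Icc τ τ') i := by
  rintro p ⟨hp, hle⟩
  have foot_mem := sub_smul_charDir_mem_PsetT (i := i) hc hp
    (sub_nonneg.2 (mem_PsetT_iff.1 hp).1.1) (le_min le_rfl hle)
  rw [sub_smul_charDir_eq] at foot_mem
  exact ⟨hp, foot_mem.2⟩

lemma inter_le_subset_domBarB (hc : 0 < c) :
    𝒫 ∩ {p | inflowDist a₁ b₁ a₂ b₂ i p / c ≤ p.1 - τ} ⊆
      domBarB c a₁ b₁ a₂ b₂ (Icc τ τ') i := by
  rintro p ⟨hp, hle⟩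
  obtain ⟨ht, hd⟩ := mem_PsetT_iff.1 hp
  have := div_nonneg (hd i) hc.le
  exact mem_domBarB_iff.2 ⟨hp, le_sub_comm.1 hle, by linarith [ht.2]⟩

lemma RegularData.barN0_eq_barB
    (h : RegularData (Icc τ τ') τ a₁ b₁ a₂ b₂ N0 ![B1, B2, B3, B4]) (hc : 0 < c)
    {p : ℝ × ℝ × ℝ} (hp : p ∈ 𝒫) (hpd : p.1 - τ = inflowDist a₁ b₁ a₂ b₂ i p / c) :
    uncurry3 (barN0 c τ N0 i) p = uncurry3 (barB c a₁ b₁ a₂ b₂ B1 B2 B3 B4 i) p := by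
  have tangent_charDir : inflowTangent i (charDir c i) = 0 := by
    fin_cases i <;> simp [inflowTangent, charDir, spX, spY]
  have foot_dist : inflowDist a₁ b₁ a₂ b₂ i (p - (p.1 - τ) • charDir c i) = 0 := by
    rw [inflowDist_sub_smul, inflowNormal_charDir_self, hpd, div_mul_cancel₀ _ hc.ne', sub_self]
  have foot_tangent : inflowTangent i (p - (p.1 - τ) • charDir c i) = inflowTangent i p := by
    rw [map_sub, map_smul, tangent_charDir, smul_zero, sub_zero]
  rw [sub_smul_charDir_eq] at foot_dist foot_tangent
  rw [uncurry3_barB_apply, ← hpd, sub_sub_cancel, ← foot_tangent]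
  exact h.compatible i _ (inter_le_subset_domBar0 hc ⟨hp, hpd.le⟩).2 foot_dist

lemma nb0_le_qval (i : Fin 4) :
    nb0 c τ a₁ b₁ a₂ b₂ T N0 i ≤ qval c τ a₁ b₁ a₂ b₂ T N0 B1 B2 B3 B4 := by
  fin_cases i <;> simp [qval]

lemma nbB_le_qval (i : Fin 4) :
    nbB c a₁ b₁ a₂ b₂ T B1 B2 B3 B4 i ≤ qval c τ a₁ b₁ a₂ b₂ T N0 B1 B2 B3 B4 := by
  fin_cases i <;> simp [qval]

lemma qval_nonneg : 0 ≤ qval c τ a₁ b₁ a₂ b₂ T N0 B1 B2 B3 B4 :=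
  (norm1E_nonneg _ _ _).trans (nb0_le_qval 0)

lemma RegularData.boundedC1On_transportedDatum
    (h : RegularData (Icc τ τ') τ a₁ b₁ a₂ b₂ N0 ![B1, B2, B3, B4]) (hc : 0 < c) (i : Fin 4) :
    BoundedC1On 𝒫 𝒟 (qval c τ a₁ b₁ a₂ b₂ (Icc τ τ') N0 B1 B2 B3 B4)
      (qval c τ a₁ b₁ a₂ b₂ (Icc τ τ') N0 B1 B2 B3 B4)
      (transportedDatum c τ a₁ b₁ a₂ b₂ N0 B1 B2 B3 B4 i) := by
  have hτ : Continuous fun p : ℝ × ℝ × ℝ => p.1 - τ := by fun_prop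
  have hd : Continuous fun p => inflowDist a₁ b₁ a₂ b₂ i p / c :=
    (continuous_inflowDist i).div_const c
  have sub₀ := inter_le_subset_domBar0 (τ := τ) (τ' := τ') (a₁ := a₁) (b₁ := b₁) (a₂ := a₂)
    (b₂ := b₂) (i := i) hc
  have subB := inter_le_subset_domBarB (τ := τ) (τ' := τ') (a₁ := a₁) (b₁ := b₁) (a₂ := a₂)
    (b₂ := b₂) (i := i) hc
  refine .ite_le hτ hd
    (.of_norm1E_le (isOpen_Dset.inter (isOpen_lt hτ hd)) sub₀ ?_
      (regularOn_barN0 (h.smooth_initial i)) (nb0_le_qval i))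
    (.of_norm1E_le (isOpen_Dset.inter (isOpen_lt hd hτ)) subB ?_
      (regularOn_barB (h.smooth_boundary i)) (nbB_le_qval i))
    (fun p hp => h.barN0_eq_barB hc hp) isOpen_Dset
    fun p hp => sub_ne_inflowDist_div hc hp
  · exact (inter_subset_inter Dset_subset_PsetT
      (ofPred_subset_ofPred.2 fun _ => le_of_lt)).trans sub₀
  · exact (inter_subset_inter Dset_subset_PsetT
      (ofPred_subset_ofPred.2 fun _ => le_of_lt)).trans subB

end TransportedData

section Operator

variable {c S τ τ' a₁ b₁ a₂ b₂ : ℝ} {N0 : Fin 4 → ℝ → ℝ → ℝ} {B1 B2 B3 B4 : ℝ → ℝ → ℝ}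
  {M : Fin 4 → ℝ → ℝ → ℝ → ℝ}

local notation "𝒫" => PsetT (Icc τ τ') a₁ b₁ a₂ b₂
local notation "𝒟" => Dset c τ τ' a₁ b₁ a₂ b₂

lemma Tcal_apply (hc : 0 < c) (i : Fin 4) (p : ℝ × ℝ × ℝ) :
    Tcal c S τ a₁ b₁ a₂ b₂ N0 B1 B2 B3 B4 M i p.1 p.2.1 p.2.2 =
      (∫ s in (p.1 - travelTime c τ a₁ b₁ a₂ b₂ i p)..p.1,
        sgn4 i * uncurry3 (QQ c S M) (p - (p.1 - s) • charDir c i)) +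
      transportedDatum c τ a₁ b₁ a₂ b₂ N0 B1 B2 B3 B4 i p := by
  obtain ⟨t, x, y⟩ := p
  have starts_inside : t - τ ≤ inflowDist a₁ b₁ a₂ b₂ i (t, x, y) / c ↔
      c * (t - τ) ≤ inflowDist a₁ b₁ a₂ b₂ i (t, x, y) := by rw [le_div_iff₀ hc, mul_comm]
  have backward (s : ℝ) : c * (s - t) = -((t - s) * c) := by ring
  rw [transportedDatum, travelTime, min_def]
  simp only [starts_inside]
  fin_cases i <;>
    simp only [Tcal, inflowDist_apply, charDir, sgn4, spX, spY, barN0, barB, uncurry3, backward,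
      Fin.isValue, Fin.zero_eta, Fin.mk_one, Fin.reduceFinMk, Matrix.cons_val', Matrix.cons_val,
      Matrix.cons_val_zero, Matrix.cons_val_one, Matrix.cons_val_fin_one, Prod.smul_mk,
      Prod.mk_sub_mk, smul_eq_mul, one_mul, mul_one, zero_mul, mul_zero, neg_mul, mul_neg,
      sub_zero, ← sub_eq_add_neg, sub_neg_eq_add, sub_sub_cancel, ← le_sub_iff_add_le',
      le_sub_comm] <;>
    split_ifs <;> simp only [sub_sub_cancel]

lemma Tcal_eq (hc : 0 < c) (i : Fin 4) (p : ℝ × ℝ × ℝ) :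
    Tcal c S τ a₁ b₁ a₂ b₂ N0 B1 B2 B3 B4 M i p.1 p.2.1 p.2.2 =
      sgn4 i * transportIntegral (uncurry3 (QQ c S M)) (charDir c i)
        (travelTime c τ a₁ b₁ a₂ b₂ i) p +
      transportedDatum c τ a₁ b₁ a₂ b₂ N0 B1 B2 B3 B4 i p := by
  rw [Tcal_apply hc, intervalIntegral.integral_const_mul, transportIntegral,
    intervalIntegral.integral_comp_sub_left
      (fun r => uncurry3 (QQ c S M) (p - r • charDir c i)), sub_self, sub_sub_cancel]

lemma boundedC1On_Tcal (hc : 0 < c) (hτ : τ < τ') (ha : a₁ < b₁) (hb : a₂ < b₂)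
    (hdata : RegularData (Icc τ τ') τ a₁ b₁ a₂ b₂ N0 ![B1, B2, B3, B4]) {R : ℝ}
    (hM : ∀ i, BoundedC1On 𝒫 𝒟 R R (uncurry3 (M i))) (i : Fin 4) :
    BoundedC1On 𝒫 𝒟
      (|c * S| * (8 + 4 / c + (8 + 8 * c) * (τ' - τ)) * R ^ 2 +
        qval c τ a₁ b₁ a₂ b₂ (Icc τ τ') N0 B1 B2 B3 B4)
      (|c * S| * (8 + 4 / c + (8 + 8 * c) * (τ' - τ)) * R ^ 2 +
        qval c τ a₁ b₁ a₂ b₂ (Icc τ τ') N0 B1 B2 B3 B4)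
      (uncurry3 (Tcal c S τ a₁ b₁ a₂ b₂ N0 B1 B2 B3 B4 M i)) := by
  have collisions := boundedC1On_transportIntegral
    (boundedC1On_QQ isOpen_Dset Dset_subset_PsetT hM c S) hc hτ ha hb i
  have abs_sgn4 : |sgn4 i| = 1 := by fin_cases i <;> simp [sgn4]
  have coefficient_nonneg : 0 ≤ |c * S| * R ^ 2 := by positivity
  have one_div_pos : 0 < 1 / c := by positivity
  have four_div : 4 / c = 4 * (1 / c) := by ring
  have duration_pos : 0 < τ' - τ := sub_pos.2 hτ
  have speed_duration_pos : 0 < c * (τ' - τ) := mul_pos hc duration_pos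
  refine (((collisions.const_mul isOpen_Dset (sgn4 i)).add
    (hdata.boundedC1On_transportedDatum hc i) isOpen_Dset).congr isOpen_Dset Dset_subset_PsetT
    fun p _ => Tcal_eq hc i p).mono ?_ ?_ <;>
    rw [abs_sgn4, one_mul, mul_right_comm |c * S|] <;> refine add_le_add_left ?_ _
  · calc 4 * |c * S| * R ^ 2 * (τ' - τ) = |c * S| * R ^ 2 * (4 * (τ' - τ)) := by ring
      _ ≤ _ := mul_le_mul_of_nonneg_left (by linarith) coefficient_nonneg
  · calc 8 * |c * S| * R ^ 2 * (τ' - τ) + (1 + 1 / c) * (4 * |c * S| * R ^ 2)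
        = |c * S| * R ^ 2 * (8 * (τ' - τ) + 4 * (1 + 1 / c)) := by ring
      _ ≤ _ := mul_le_mul_of_nonneg_left (by linarith) coefficient_nonneg

lemma isCompact_PsetT : IsCompact 𝒫 :=
  isCompact_Icc.prod (isCompact_Icc.prod isCompact_Icc)

lemma memE.boundedC1On {u : ℝ → ℝ → ℝ → ℝ} (hu : memE c τ τ' a₁ b₁ a₂ b₂ u) {K : ℝ}
    (hK : norm1E 𝒫 𝒟 u ≤ K) : BoundedC1On 𝒫 𝒟 K K (uncurry3 u) :=
  .of_norm1E_le isOpen_Dset Subset.rfl Subset.rfl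
    ⟨hu.1, isCompact_PsetT.exists_bound_of_continuousOn hu.1, hu.2⟩ hK

lemma mem_MR_iff {R : ℝ} (hR : 0 ≤ R) {N : Fin 4 → ℝ → ℝ → ℝ → ℝ} :
    N ∈ MR c τ τ' a₁ b₁ a₂ b₂ R ↔ ∀ i, BoundedC1On 𝒫 𝒟 R R (uncurry3 (N i)) :=
  ⟨fun hN i => (hN.1 i).boundedC1On (NN4_le_iff.1 hN.2 i), fun hN =>
    ⟨fun i => ⟨(hN i).continuousOn, (hN i).derivReg isOpen_Dset⟩,
      NN4_le_iff.2 fun i => (hN i).norm1E_le isOpen_Dset hR⟩⟩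

lemma nonneg_of_mem_MR {R : ℝ} {N : Fin 4 → ℝ → ℝ → ℝ → ℝ}
    (hN : N ∈ MR c τ τ' a₁ b₁ a₂ b₂ R) : 0 ≤ R :=
  (NN4_nonneg _ _ N).trans hN.2

lemma Tcal_mem_MR (hc : 0 < c) (hτ : τ < τ') (ha : a₁ < b₁) (hb : a₂ < b₂)
    (hdata : RegularData (Icc τ τ') τ a₁ b₁ a₂ b₂ N0 ![B1, B2, B3, B4]) {R : ℝ}
    (hM : M ∈ MR c τ τ' a₁ b₁ a₂ b₂ R) :
    Tcal c S τ a₁ b₁ a₂ b₂ N0 B1 B2 B3 B4 M ∈ MR c τ τ' a₁ b₁ a₂ b₂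
      (|c * S| * (8 + 4 / c + (8 + 8 * c) * (τ' - τ)) * R ^ 2 +
        qval c τ a₁ b₁ a₂ b₂ (Icc τ τ') N0 B1 B2 B3 B4) := by
  have := sub_pos.2 hτ
  have := qval_nonneg (c := c) (τ := τ) (a₁ := a₁) (b₁ := b₁) (a₂ := a₂) (b₂ := b₂)
    (T := Icc τ τ') (N0 := N0) (B1 := B1) (B2 := B2) (B3 := B3) (B4 := B4)
  exact (mem_MR_iff (by positivity)).2 (boundedC1On_Tcal hc hτ ha hb hdata
    ((mem_MR_iff (nonneg_of_mem_MR hM)).1 hM))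

lemma exists_subseq_tendstoUniformlyOn_of_mem_MR (hτ : τ < τ') (ha : a₁ < b₁) (hb : a₂ < b₂)
    {R : ℝ} {F : ℕ → Fin 4 → ℝ → ℝ → ℝ → ℝ} (hF : ∀ n, F n ∈ MR c τ τ' a₁ b₁ a₂ b₂ R) :
    ∃ φ : ℕ → ℕ, StrictMono φ ∧ ∃ G : Fin 4 → ℝ → ℝ → ℝ → ℝ, (∀ i, Cont3 (G i) 𝒫) ∧
      ∀ i, TendstoUniformlyOn (fun n => uncurry3 (F (φ n) i)) (uncurry3 (G i)) atTop 𝒫 := by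
  have hR : 0 ≤ R := nonneg_of_mem_MR (hF 0)
  have hF' : ∀ n i, BoundedC1On 𝒫 𝒟 R R (uncurry3 (F n i)) := fun n => (mem_MR_iff hR).1 (hF n)
  obtain ⟨φ, hφ, v, hv, hlim⟩ := exists_subseq_tendstoUniformlyOn_of_lipschitzOnWith
    (u := fun n p i => uncurry3 (F n i) p) isCompact_PsetT
    (isCompact_closedBall (0 : Fin 4 → ℝ) R)
    (fun n => LipschitzOnWith.of_dist_le_mul fun p hp q hq =>
      (dist_pi_le_iff (by positivity)).2 fun i =>
        ((hF' n i).lipschitzOnWith hτ ha hb).dist_le_mul p hp q hq)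
    (fun n p hp => mem_closedBall_zero_iff.2
      ((pi_norm_le_iff_of_nonneg hR).2 fun i => (hF' n i).abs_le p hp))
  exact ⟨φ, hφ, fun i t x y => v (t, x, y) i, continuousOn_pi.1 hv,
    fun i => (Pi.uniformContinuous_proj _ i).comp_tendstoUniformlyOn hlim⟩

end Operator

theorem Tcal_bound_and_compact_general
    (c S τ τ' a₁ b₁ a₂ b₂ : ℝ) (hc : 0 < c) (hτ : τ < τ') (ha : a₁ < b₁) (hb : a₂ < b₂)
    (N0 : Fin 4 → ℝ → ℝ → ℝ) (B1 B2 B3 B4 : ℝ → ℝ → ℝ)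
    (hdata : RegularData (Icc τ τ') τ a₁ b₁ a₂ b₂ N0 ![B1, B2, B3, B4]) :
    (∀ M : Fin 4 → ℝ → ℝ → ℝ → ℝ, (∀ i, memE c τ τ' a₁ b₁ a₂ b₂ (M i)) →
      NN4 (PsetT (Icc τ τ') a₁ b₁ a₂ b₂) (Dset c τ τ' a₁ b₁ a₂ b₂)
          (Tcal c S τ a₁ b₁ a₂ b₂ N0 B1 B2 B3 B4 M) ≤
        |c * S| * (8 + 4 / c + (8 + 8 * c) * (τ' - τ)) *
            (NN4 (PsetT (Icc τ τ') a₁ b₁ a₂ b₂) (Dset c τ τ' a₁ b₁ a₂ b₂) M) ^ 2 +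
          qval c τ a₁ b₁ a₂ b₂ (Icc τ τ') N0 B1 B2 B3 B4) ∧
    (∀ R, ∀ M ∈ MR c τ τ' a₁ b₁ a₂ b₂ R,
      Tcal c S τ a₁ b₁ a₂ b₂ N0 B1 B2 B3 B4 M ∈ MR c τ τ' a₁ b₁ a₂ b₂
        (|c * S| * (8 + 4 / c + (8 + 8 * c) * (τ' - τ)) * R ^ 2 +
          qval c τ a₁ b₁ a₂ b₂ (Icc τ τ') N0 B1 B2 B3 B4)) ∧
    (∀ R, ∀ F : ℕ → Fin 4 → ℝ → ℝ → ℝ → ℝ, (∀ n, F n ∈ MR c τ τ' a₁ b₁ a₂ b₂ R) →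
      ∃ φ : ℕ → ℕ, StrictMono φ ∧ ∃ G : Fin 4 → ℝ → ℝ → ℝ → ℝ,
        (∀ i, Cont3 (G i) (PsetT (Icc τ τ') a₁ b₁ a₂ b₂)) ∧
        ∀ i : Fin 4, TendstoUniformlyOn
          (fun n => uncurry3 (Tcal c S τ a₁ b₁ a₂ b₂ N0 B1 B2 B3 B4 (F (φ n)) i))
          (uncurry3 (G i)) atTop (PsetT (Icc τ τ') a₁ b₁ a₂ b₂)) :=
  ⟨fun _ hM => (Tcal_mem_MR hc hτ ha hb hdata ⟨hM, le_rfl⟩).2,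
    fun _ _ hM => Tcal_mem_MR hc hτ ha hb hdata hM,
    fun _ _ hF => exists_subseq_tendstoUniformlyOn_of_mem_MR hτ ha hb
      fun n => Tcal_mem_MR hc hτ ha hb hdata (hF n)⟩

/-- `𝒩(𝒯(M)) ≤ p·𝒩(M)² + q`; hence `𝒯(𝓜_R) ⊆ 𝓜_(pR²+q)` and `𝒯` is compact on `𝓜_R`. -/
theorem Tcal_bound_and_compact
    (c S τ τ' a₁ b₁ a₂ b₂ : ℝ) (hc : 0 < c) (hS : 0 < S)
    (hτ : τ < τ') (ha : a₁ < b₁) (hb : a₂ < b₂)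
    (N0 : Fin 4 → ℝ → ℝ → ℝ) (B1 B2 B3 B4 : ℝ → ℝ → ℝ)
    (hdata : NiceData (Icc τ τ') τ a₁ b₁ a₂ b₂ N0 B1 B2 B3 B4) :
    (∀ M : Fin 4 → ℝ → ℝ → ℝ → ℝ, (∀ i, memE c τ τ' a₁ b₁ a₂ b₂ (M i)) →
      NN4 (PsetT (Icc τ τ') a₁ b₁ a₂ b₂) (Dset c τ τ' a₁ b₁ a₂ b₂) (Tcal c S τ a₁ b₁ a₂ b₂ N0 B1 B2 B3 B4 M) ≤
        c * S * (8 + 4 / c + (8 + 8 * c) * (τ' - τ)) * (NN4 (PsetT (Icc τ τ') a₁ b₁ a₂ b₂) (Dset c τ τ' a₁ b₁ a₂ b₂) M) ^ 2 + qval c τ a₁ b₁ a₂ b₂ (Icc τ τ') N0 B1 B2 B3 B4) ∧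
    (∀ R > 0, ∀ M ∈ MR c τ τ' a₁ b₁ a₂ b₂ R,
      Tcal c S τ a₁ b₁ a₂ b₂ N0 B1 B2 B3 B4 M ∈ MR c τ τ' a₁ b₁ a₂ b₂ (c * S * (8 + 4 / c + (8 + 8 * c) * (τ' - τ)) * R ^ 2 + qval c τ a₁ b₁ a₂ b₂ (Icc τ τ') N0 B1 B2 B3 B4)) ∧
    (∀ R > 0, ∀ F : ℕ → Fin 4 → ℝ → ℝ → ℝ → ℝ,
      (∀ n, F n ∈ MR c τ τ' a₁ b₁ a₂ b₂ R) →
      ∃ φ : ℕ → ℕ, StrictMono φ ∧ ∃ G : Fin 4 → ℝ → ℝ → ℝ → ℝ,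
        (∀ i, Cont3 (G i) (PsetT (Icc τ τ') a₁ b₁ a₂ b₂)) ∧
        ∀ i : Fin 4, TendstoUniformlyOn
          (fun n (p : ℝ × ℝ × ℝ) => Tcal c S τ a₁ b₁ a₂ b₂ N0 B1 B2 B3 B4 (F (φ n)) i p.1 p.2.1 p.2.2)
          (fun p => G i p.1 p.2.1 p.2.2) Filter.atTop (PsetT (Icc τ τ') a₁ b₁ a₂ b₂)) := by
  have h := Tcal_bound_and_compact_general c S τ τ' a₁ b₁ a₂ b₂ hc hτ ha hb N0 B1 B2 B3 B4
    hdata.regularData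
  rw [abs_of_pos (mul_pos hc hS)] at h
  exact ⟨h.1, fun R _ => h.2.1 R, fun R _ => h.2.2 R⟩

end
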